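/- For every m ≥ 1 and r > 0 there exists a family of linear operators S_{t,s,r} : C^∞_0(B̄_r) → C^∞_0(B̄_r), indexed by t ≥ 1 and s > 0, such that for all j, k, l, n ∈ ℕ there are constants C = C(j,k,l,n,r) > 0 with, for all f ∈ C^∞_0(B̄_r), all s > 0 and all t ≥ 1: ⟨S_{t,s,r}(f)⟩_{n+l,k+j,r} ≤ C · s^j · t^l · ⟨f⟩_{n,k+2l,r} and ⟨(S_{t,s,r} − id)(f)⟩_{n,k+2l,r} ≤ C · ( t^{-l} · ⟨f⟩_{n+l,k,r} + s^{-j} · ⟨f⟩_{n,k+2l+j,r} ). -/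

import Mathlib

open Metric Set

/-- Membership in `C^∞₀(B̄_r)`: smooth on the closed ball and flat at the origin. -/
def FlatSmoothOnBall (m : ℕ) (r : ℝ) (f : EuclideanSpace ℝ (Fin m) → ℝ) : Prop :=
  ContDiffOn ℝ (⊤ : ℕ∞) f (closedBall 0 r) ∧
    ∀ i : ℕ, iteratedFDerivWithin ℝ i f (closedBall 0 r) 0 = 0

/-- The weighted norm `⟨f⟩_{n,k,r}` on flat functions on the closed ball. -/
noncomputable def flatNorm (m : ℕ) (r : ℝ) (n k : ℕ)
    (f : EuclideanSpace ℝ (Fin m) → ℝ) : ℝ :=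
  ⨆ p : (closedBall (0 : EuclideanSpace ℝ (Fin m)) r \ {0} :
      Set (EuclideanSpace ℝ (Fin m))) × Fin (n + 1),
    ‖(p.1 : EuclideanSpace ℝ (Fin m))‖ ^ (-(k : ℤ)) *
      ‖iteratedFDerivWithin ℝ p.2 f (closedBall 0 r) p.1‖



/-- coefficients -/
noncomputable def bCoef : ℕ → ℝ
  | 0 => 1
  | (k+1) => - bCoef k / (2 ^ (k+1) - 1)

lemma two_pow_sub_pos (k : ℕ) : (0:ℝ) < 2 ^ (k+1) - 1 := by
  have : (1:ℝ) < 2 ^ (k+1) := one_lt_pow₀ (by norm_num) (by omega)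
  linarith

lemma bCoef_ne (k : ℕ) : bCoef k ≠ 0 := by
  induction k with
  | zero => simp [bCoef]
  | succ k ih => 
    simp only [bCoef]
    exact div_ne_zero (neg_ne_zero.2 ih) (two_pow_sub_pos k).ne'

lemma bCoef_summable (z : ℝ) : Summable (fun k => ‖bCoef k * z ^ k‖) := by
  by_cases hz : z = 0
  · subst hz
    apply summable_of_ne_finset_zero (s := {0})
    intro k hk
    have : k ≠ 0 := by simpa using hk
    simp [this]
  have h2 : Filter.Tendsto (fun k : ℕ => |z| * ((2:ℝ) ^ (k+1) - 1)⁻¹) Filter.atTop (nhds 0) := by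
    have : Filter.Tendsto (fun k : ℕ => ((2:ℝ) ^ (k+1) - 1)⁻¹) Filter.atTop (nhds 0) := by
      apply Filter.Tendsto.inv_tendsto_atTop
      apply Filter.tendsto_atTop_add_const_right
      exact (tendsto_pow_atTop_atTop_of_one_lt (by norm_num : (1:ℝ) < 2)).comp
        (Filter.tendsto_add_atTop_nat 1)
    simpa using this.const_mul |z|
  refine Summable.norm ?_
  refine summable_of_ratio_test_tendsto_lt_one (l := 0) (by norm_num) ?_ ?_
  · exact Filter.Eventually.of_forall fun k => mul_ne_zero (bCoef_ne k) (pow_ne_zero _ hz)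
  · refine h2.congr fun k => ?_
    have h1 := bCoef_ne k
    have h3 := two_pow_sub_pos k
    simp only [bCoef, norm_mul, norm_div, norm_neg, norm_pow, Real.norm_eq_abs, abs_of_pos h3]
    have h4 : |bCoef k| ≠ 0 := abs_ne_zero.2 h1
    have h5 : |z| ≠ 0 := abs_ne_zero.2 hz
    field_simp
    ring

/-- generating function -/
noncomputable def bF (z : ℝ) : ℝ := ∑' k, bCoef k * z ^ k

lemma bF_two (w : ℝ) : bF (2 * w) = (1 - w) * bF w := by
  have hs := fun z => (bCoef_summable z).of_norm
  have h1 : bF (2*w) = 1 + ∑' k, bCoef (k+1) * (2*w)^(k+1) := by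
    rw [bF, (hs (2*w)).tsum_eq_zero_add]; simp [bCoef]
  have h2 : bF w = 1 + ∑' k, bCoef (k+1) * w^(k+1) := by
    rw [bF, (hs w).tsum_eq_zero_add]; simp [bCoef]
  have h3 : ∑' k, bCoef (k+1) * (2*w)^(k+1) = ∑' k, bCoef (k+1) * w^(k+1) - w * bF w := by
    rw [bF, ← tsum_mul_left, ← Summable.tsum_sub]
    · congr 1; ext k
      have h3 := (two_pow_sub_pos k).ne'
      rw [mul_pow]
      simp only [bCoef]
      field_simp
      ring
    · exact (summable_nat_add_iff 1).2 (hs w)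
    · exact (hs w).mul_left w
  rw [h1, h3]; linarith

lemma bF_pow (q : ℕ) : bF (2 ^ (q+1)) = 0 := by
  induction q with
  | zero => have := bF_two 1; simpa using this
  | succ q ih => rw [pow_succ', bF_two, ih, mul_zero]

lemma bF_one : bF 1 ≠ 0 := by
  intro h
  have h0 : ∀ n : ℕ, bF ((1/2) ^ n) = 0 := by
    intro n
    induction n with
    | zero => simpa using h
    | succ n ih => 
      have := bF_two ((1/2)^(n+1))
      rw [show (2:ℝ) * (1/2)^(n+1) = (1/2)^n by rw [pow_succ]; ring, ih] at this
      have h1 : (1:ℝ) - (1/2)^(n+1) ≠ 0 := by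
        have : ((1:ℝ)/2)^(n+1) < 1 := pow_lt_one₀ (by norm_num) (by norm_num) (by omega)
        linarith
      rcases mul_eq_zero.1 this.symm with h2 | h2
      · exact absurd h2 h1
      · exact h2
  have hb : Summable (fun k => ‖bCoef k * 1 ^ k‖) := bCoef_summable 1
  have ht : Filter.Tendsto (fun n : ℕ => bF ((1/2)^n)) Filter.atTop (nhds (∑' k, bCoef k * 0 ^ k)) := by
    unfold bF
    refine tendsto_tsum_of_dominated_convergence (bound := fun k => ‖bCoef k * 1 ^ k‖) hb ?_ ?_
    · intro k
      have : Filter.Tendsto (fun n : ℕ => ((1:ℝ)/2)^n) Filter.atTop (nhds 0) :=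
        tendsto_pow_atTop_nhds_zero_of_lt_one (by norm_num) (by norm_num)
      exact (this.pow k).const_mul _
    · refine Filter.Eventually.of_forall fun n k => ?_
      rw [norm_mul, norm_mul]
      refine mul_le_mul_of_nonneg_left ?_ (norm_nonneg _)
      rw [one_pow, norm_one, norm_pow]
      refine pow_le_one₀ (norm_nonneg _) ?_
      rw [norm_pow]
      exact pow_le_one₀ (norm_nonneg _) (by norm_num)
  have h1 : (∑' k, bCoef k * (0:ℝ) ^ k) = 1 := by
    rw [tsum_eq_single 0]
    · simp [bCoef]
    · intro k hk; simp [hk]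
  rw [h1] at ht
  have h2 : (fun n : ℕ => bF ((1/2)^n)) = fun _ => 0 := funext h0
  rw [h2] at ht
  exact zero_ne_one (tendsto_nhds_unique tendsto_const_nhds ht)

lemma hasSum_cong' {F : Type*} [NormedAddCommGroup F] {f g : ℕ → F} {a b : F} (h : HasSum f a)
    (hf : ∀ k, g k = f k) (hab : b = a) : HasSum g b := by
  rw [hab, show g = f from funext hf]; exact h

lemma exists_coef : ∃ a : ℕ → ℝ, (∀ q : ℕ, Summable (fun k => |a k| * (2 ^ k) ^ q)) ∧
    ∀ q : ℕ, HasSum (fun k => a k * (2 ^ k) ^ q) (if q = 0 then 1 else 0) := by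
  refine ⟨fun k => bCoef k / bF 1, fun q => ?_, fun q => ?_⟩
  · refine ((bCoef_summable (2^q)).div_const |bF 1|).congr fun k => ?_
    simp only [norm_mul, norm_pow, Real.norm_eq_abs, abs_div, Nat.abs_ofNat]
    rw [← pow_mul, ← pow_mul, mul_comm q k]; ring
  · have := ((bCoef_summable (2^q)).of_norm.hasSum).div_const (bF 1)
    refine hasSum_cong' this (fun k => ?_) ?_
    · rw [← pow_mul, ← pow_mul, mul_comm q k]; ring
    · change _ = bF (2^q) / bF 1
      rcases q with _ | q
      · simp [bF_one]
      · simp [bF_pow]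

lemma poly_hasSum {a : ℕ → ℝ}
    (ha : ∀ q : ℕ, HasSum (fun k => a k * (2 ^ k) ^ q) (if q = 0 then 1 else 0))
    (P : Polynomial ℝ) (θ : ℝ) : HasSum (fun k => a k * P.eval (2 ^ k * θ)) (P.eval 0) := by
  induction P using Polynomial.induction_on' with
  | add p q hp hq => 
    simp only [Polynomial.eval_add, mul_add]
    exact hp.add hq
  | monomial n c => 
    have := (ha n).mul_left (c * θ ^ n)
    refine hasSum_cong' this (fun k => ?_) ?_
    · simp; ring
    · rcases n with _ | n <;> simp

lemma taylor_aux {F : Type*} [NormedAddCommGroup F] [NormedSpace ℝ F] {H : ℝ → F}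
    (hH : ContDiff ℝ (⊤ : ℕ∞) H) {ω M : ℝ} (hω : 0 < ω) (l : ℕ)
    (hM : ∀ u ∈ Icc 0 ω, ‖iteratedDeriv l H u‖ ≤ M) {θ : ℝ} (h : θ ∈ Icc 0 ω) :
    ‖H θ - ∑ q ∈ Finset.range l, (θ ^ q / (q.factorial : ℝ)) • iteratedDeriv q H 0‖ ≤ M * θ ^ l := by
  have hu : UniqueDiffOn ℝ (Icc 0 ω) := uniqueDiffOn_Icc hω
  have key : ∀ q : ℕ, ∀ u ∈ Icc 0 ω, iteratedDerivWithin q H (Icc 0 ω) u = iteratedDeriv q H u := by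
    intro q u hu'
    exact iteratedDerivWithin_eq_iteratedDeriv hu ((hH.of_le (by exact_mod_cast le_top)).contDiffAt) hu'
  rcases l with _ | l
  · simpa using hM θ h
  have := taylor_mean_remainder_bound (f := H) (n := l) (C := M) hω.le
    ((hH.of_le (by exact_mod_cast le_top)).contDiffOn) h (fun y hy => by rw [key _ _ hy]; exact hM y hy)
  rw [taylor_within_apply] at this
  have h2 : ∑ k ∈ Finset.range (l + 1), ((k.factorial : ℝ)⁻¹ * (θ - 0) ^ k) • iteratedDerivWithin k H (Icc 0 ω) 0
     = ∑ q ∈ Finset.range (l+1), (θ ^ q / (q.factorial : ℝ)) • iteratedDeriv q H 0 := by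
    refine Finset.sum_congr rfl fun q _ => ?_
    rw [key _ _ ⟨le_rfl, hω.le⟩, sub_zero]
    congr 1
    ring
  rw [h2] at this
  refine this.trans ?_
  have hM0 : 0 ≤ M := (norm_nonneg _).trans (hM θ h)
  rw [sub_zero]
  have h3 : 0 ≤ θ ^ (l+1) := pow_nonneg h.1 _
  apply div_le_of_le_mul₀ (by positivity) (by positivity)
  have : (1:ℝ) ≤ l.factorial := by exact_mod_cast Nat.one_le_iff_ne_zero.2 (Nat.factorial_ne_zero l)
  exact le_mul_of_one_le_right (by positivity) this

lemma sum_lemma {a : ℕ → ℝ} (ha1 : ∀ q : ℕ, Summable (fun k => |a k| * (2 ^ k) ^ q))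
    (ha : ∀ q : ℕ, HasSum (fun k => a k * (2 ^ k) ^ q) (if q = 0 then 1 else 0)) (l i : ℕ) :
    ∃ C : ℝ, 0 < C ∧ ∀ {F : Type} [NormedAddCommGroup F] [NormedSpace ℝ F] (H : ℝ → F)
      (_ : ContDiff ℝ (⊤ : ℕ∞) H) (ω M θ : ℝ) (_ : 0 < ω) (_ : 0 < θ) (_ : θ ≤ 1)
      (_ : ∀ u ∈ Icc 0 ω, ‖iteratedDeriv l H u‖ ≤ M)
      (_ : ∀ q ≤ l, ‖iteratedDeriv q H 0‖ ≤ ω ^ (l - q) * M)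
      (K : Finset ℕ) (_ : ∀ k, k ∈ K ↔ 2 ^ k * θ ≤ ω),
      ‖∑ k ∈ K, (a k * (1 - 2 ^ k * θ) ^ i) • H (2 ^ k * θ) - H 0‖ ≤ C * θ ^ l * M := by
  obtain ⟨A, hA⟩ : ∃ A, A = ∑' k, |a k| * (2 ^ k) ^ (i + l) := ⟨_, rfl⟩
  have hA0 : 0 ≤ A := hA ▸ tsum_nonneg fun k => by positivity
  refine ⟨2 ^ i * (l + 2) * A + 1, by positivity, ?_⟩
  intro F _ _ H hH ω M θ hω hθ hθ1 hM hM2 K hK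
  have hM0 : 0 ≤ M := (norm_nonneg _).trans (hM 0 ⟨le_rfl, hω.le⟩)
  set c : ℕ → F := fun q => ((q.factorial : ℝ)⁻¹) • iteratedDeriv q H 0 with hc
  have hcb : ∀ q ≤ l, ‖c q‖ ≤ ω ^ (l - q) * M := by
    intro q hq
    rw [hc]; simp only [norm_smul, norm_inv, Real.norm_natCast]
    have : (1:ℝ) ≤ q.factorial := by exact_mod_cast Nat.one_le_iff_ne_zero.2 (Nat.factorial_ne_zero q)
    calc _ ≤ 1 * ‖iteratedDeriv q H 0‖ := by gcongr; exact inv_le_one_of_one_le₀ this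
      _ ≤ _ := by rw [one_mul]; exact hM2 q hq
  set T : ℝ → F := fun u => ∑ q ∈ Finset.range (l+1), u ^ q • c q with hT
  set G : ℕ → F := fun k => if k ∈ K then H (2 ^ k * θ) else 0 with hG
  -- moments
  have hTsum : HasSum (fun k => (a k * (1 - 2 ^ k * θ) ^ i) • T (2 ^ k * θ)) (H 0) := by
    have h1 : ∀ q ∈ Finset.range (l+1),
        HasSum (fun k => (a k * (1 - 2 ^ k * θ) ^ i) • ((2 ^ k * θ) ^ q • c q)) 
          ((if q = 0 then (1:ℝ) else 0) • c q) := by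
      intro q _
      have := (poly_hasSum ha ((1 - Polynomial.X) ^ i * Polynomial.X ^ q) θ).smul_const (c q)
      refine hasSum_cong' this (fun k => ?_) ?_
      · rw [smul_smul]; congr 1; simp; ring
      · congr 1; rcases q with _ | q <;> simp
    have h2 := hasSum_sum h1
    refine hasSum_cong' h2 (fun k => ?_) ?_
    · rw [hT]; simp only [Finset.smul_sum]
    · rw [Finset.sum_range_succ']; simp [hc]
  have hGsum : HasSum (fun k => (a k * (1 - 2 ^ k * θ) ^ i) • G k) 
      (∑ k ∈ K, (a k * (1 - 2 ^ k * θ) ^ i) • H (2 ^ k * θ)) := by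
    have : ∑ k ∈ K, (a k * (1 - 2 ^ k * θ) ^ i) • H (2 ^ k * θ) = ∑ k ∈ K, (a k * (1 - 2 ^ k * θ) ^ i) • G k := by
      refine Finset.sum_congr rfl fun k hk => ?_
      rw [hG]; simp [hk]
    rw [this]
    apply hasSum_sum_of_ne_finset_zero
    intro k hk; rw [hG]; simp [hk]
  have hdiff := hGsum.sub hTsum
  have hbound : ∀ k, ‖G k - T (2 ^ k * θ)‖ ≤ (l + 2) * M * (2 ^ k * θ) ^ l := by
    intro k
    set u := 2 ^ k * θ with hu
    have hu0 : 0 < u := by positivity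
    by_cases hk : k ∈ K
    · have huω := (hK k).1 hk
      have h1 := taylor_aux hH hω l hM (θ := u) ⟨hu0.le, huω⟩
      have h2 : G k - T u = (H u - ∑ q ∈ Finset.range l, (u ^ q / (q.factorial : ℝ)) • iteratedDeriv q H 0)
          - u ^ l • c l := by
        rw [hG, hT]; simp only [hk, if_true]
        rw [Finset.sum_range_succ, sub_add_eq_sub_sub]
        congr 2
        refine Finset.sum_congr rfl fun q _ => ?_
        rw [hc]; simp only [smul_smul]; congr 1
      rw [h2]
      refine (norm_sub_le _ _).trans ?_
      have h3 : ‖u ^ l • c l‖ ≤ u ^ l * M := by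
        rw [norm_smul, norm_pow, Real.norm_of_nonneg hu0.le]
        have := hcb l le_rfl
        gcongr
        simpa using this
      have : 0 ≤ M * u ^ l := by positivity
      have : 0 ≤ l * (M * u ^ l) := by positivity
      nlinarith
    · have huω : ω ≤ u := by
        by_contra hcon
        exact hk ((hK k).2 (not_le.1 hcon).le)
      have h2 : G k - T u = - T u := by rw [hG]; simp [hk]
      rw [h2, norm_neg, hT]
      refine (norm_sum_le _ _).trans ?_
      have h3 : ∀ q ∈ Finset.range (l+1), ‖u ^ q • c q‖ ≤ M * u ^ l := by
        intro q hq
        have hq' : q ≤ l := by simpa [Nat.lt_succ_iff] using hq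
        rw [norm_smul, norm_pow, Real.norm_of_nonneg hu0.le]
        calc u ^ q * ‖c q‖ ≤ u ^ q * (u ^ (l - q) * M) := by
              gcongr
              exact (hcb q hq').trans (by gcongr)
          _ = M * u ^ l := by 
              rw [← mul_assoc, ← pow_add, Nat.add_sub_cancel' hq', mul_comm]
      refine (Finset.sum_le_sum h3).trans ?_
      simp only [Finset.sum_const, Finset.card_range, nsmul_eq_mul]
      push_cast
      have : 0 ≤ M * u ^ l := by positivity
      nlinarith
  have hterm : ∀ k, ‖(a k * (1 - 2 ^ k * θ) ^ i) • G k - (a k * (1 - 2 ^ k * θ) ^ i) • T (2 ^ k * θ)‖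
      ≤ (2 ^ i * (l + 2) * M * θ ^ l) * (|a k| * (2 ^ k) ^ (i + l)) := by
    intro k
    rw [← smul_sub, norm_smul, norm_mul, norm_pow, Real.norm_eq_abs, Real.norm_eq_abs]
    have h1 : |1 - 2 ^ k * θ| ≤ 2 * 2 ^ k := by
      have : (1:ℝ) ≤ 2 ^ k := one_le_pow₀ (by norm_num)
      rw [abs_le]; constructor <;> nlinarith
    calc _ ≤ |a k| * (2 * 2 ^ k) ^ i * ((l + 2) * M * (2 ^ k * θ) ^ l) := by
          gcongr
          exact hbound k
      _ = _ := by rw [mul_pow, mul_pow, pow_add]; ring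
  rw [← hdiff.tsum_eq]
  have hs : HasSum (fun k => (2 ^ i * (l + 2) * M * θ ^ l) * (|a k| * (2 ^ k) ^ (i + l)))
    ((2 ^ i * (l + 2) * M * θ ^ l) * A) := by
    rw [hA]; exact (ha1 (i+l)).hasSum.mul_left _
  refine (tsum_of_norm_bounded hs hterm).trans ?_
  have : 0 ≤ θ ^ l * M := by positivity
  nlinarith


/-- averaging operator -/
noncomputable def JJ {m : ℕ} {F : Type} [NormedAddCommGroup F] [NormedSpace ℝ F]
    (ψ : EuclideanSpace ℝ (Fin m) → ℝ) (θ : ℝ) (h : EuclideanSpace ℝ (Fin m) → F)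
    (x : EuclideanSpace ℝ (Fin m)) : F :=
  ∫ p, ψ p • h ((1 - θ) • x + θ • p)

section JJ
variable {m : ℕ} {F : Type} [NormedAddCommGroup F] [NormedSpace ℝ F]

lemma JJ_integrable {ψ : EuclideanSpace ℝ (Fin m) → ℝ} (hψ : Continuous ψ)
    (hψc : HasCompactSupport ψ) (θ : ℝ) {h : EuclideanSpace ℝ (Fin m) → F} (hh : Continuous h)
    (x : EuclideanSpace ℝ (Fin m)) :
    MeasureTheory.Integrable (fun p => ψ p • h ((1 - θ) • x + θ • p)) :=
  (hψ.smul (hh.comp (by fun_prop))).integrable_of_hasCompactSupport hψc.smul_right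

lemma JJ_norm_le {ψ : EuclideanSpace ℝ (Fin m) → ℝ} (hψ : Continuous ψ)
    (hψc : HasCompactSupport ψ) (θ : ℝ) {h : EuclideanSpace ℝ (Fin m) → F}
    (x : EuclideanSpace ℝ (Fin m)) {B : ℝ}
    (hB : ∀ p, ψ p ≠ 0 → ‖h ((1 - θ) • x + θ • p)‖ ≤ B) :
    ‖JJ ψ θ h x‖ ≤ (∫ p, ‖ψ p‖) * B := by
  rw [← MeasureTheory.integral_mul_const]
  refine MeasureTheory.norm_integral_le_of_norm_le ?_ ?_
  · exact ((hψ.integrable_of_hasCompactSupport hψc).norm).mul_const B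
  · refine Filter.Eventually.of_forall fun p => ?_
    rw [norm_smul]
    by_cases hp : ψ p = 0
    · simp [hp]
    · exact mul_le_mul_of_nonneg_left (hB p hp) (norm_nonneg _)

lemma JJ_hasFDerivAt {ψ : EuclideanSpace ℝ (Fin m) → ℝ} (hψ : Continuous ψ)
    (hψc : HasCompactSupport ψ) (θ : ℝ) {h : EuclideanSpace ℝ (Fin m) → F}
    (hh : ContDiff ℝ (⊤ : ℕ∞) h) (hc : HasCompactSupport h) (x : EuclideanSpace ℝ (Fin m)) :
    HasFDerivAt (JJ ψ θ h) ((1 - θ) • JJ ψ θ (fderiv ℝ h) x) x := by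
  have hd : Continuous (fderiv ℝ h) := hh.continuous_fderiv (by simp)
  obtain ⟨C, hC⟩ := hd.bounded_above_of_compact_support (hc.fderiv ℝ)
  have hrw : (1 - θ) • JJ ψ θ (fderiv ℝ h) x
      = ∫ p, ψ p • ((1 - θ) • fderiv ℝ h ((1 - θ) • x + θ • p)) := by
    rw [JJ, ← MeasureTheory.integral_smul]
    congr 1; ext1 p; rw [smul_comm]
  rw [hrw]
  refine hasFDerivAt_integral_of_dominated_of_fderiv_le (s := univ) 
    (F' := fun x p => ψ p • ((1 - θ) • fderiv ℝ h ((1 - θ) • x + θ • p)))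
    (bound := fun p => ‖ψ p‖ * (‖1 - θ‖ * C)) Filter.univ_mem ?_ ?_ ?_ ?_ ?_ ?_
  · exact Filter.Eventually.of_forall fun y =>
      (JJ_integrable hψ hψc θ hh.continuous y).aestronglyMeasurable
  · exact JJ_integrable hψ hψc θ hh.continuous x
  · have hi := ((JJ_integrable hψ hψc θ hd x).smul (1 - θ)).aestronglyMeasurable
    refine hi.congr (Filter.Eventually.of_forall fun p => ?_)
    exact smul_comm (1 - θ) (ψ p) (fderiv ℝ h ((1 - θ) • x + θ • p))
  · refine Filter.Eventually.of_forall fun p y _ => ?_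
    rw [norm_smul, norm_smul]
    have := hC ((1 - θ) • y + θ • p)
    gcongr
  · exact ((hψ.integrable_of_hasCompactSupport hψc).norm).mul_const _
  · refine Filter.Eventually.of_forall fun p y _ => ?_
    refine HasFDerivAt.const_smul ?_ _
    have h1 : HasFDerivAt h (fderiv ℝ h ((1 - θ) • y + θ • p)) ((1 - θ) • y + θ • p) :=
      (hh.differentiable (by simp) _).hasFDerivAt
    have h2 : HasFDerivAt (fun y : EuclideanSpace ℝ (Fin m) => (1 - θ) • y + θ • p)
        ((1 - θ) • ContinuousLinearMap.id ℝ _) y :=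
      ((hasFDerivAt_id y).const_smul (1 - θ)).add_const _
    have h3 := h1.comp y h2
    have e : (fderiv ℝ h ((1 - θ) • y + θ • p)).comp ((1 - θ) • ContinuousLinearMap.id ℝ _)
        = (1 - θ) • fderiv ℝ h ((1 - θ) • y + θ • p) := by
      rw [ContinuousLinearMap.comp_smul, ContinuousLinearMap.comp_id]
    rw [e] at h3
    exact h3

lemma lie_int {A B : Type} [NormedAddCommGroup A] [NormedSpace ℝ A] [NormedAddCommGroup B]
    [NormedSpace ℝ B] (L : A ≃ₗᵢ[ℝ] B) (u : EuclideanSpace ℝ (Fin m) → A) :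
    L (∫ p, u p) = ∫ p, L (u p) :=
  (L.toContinuousLinearEquiv.integral_comp_comm u).symm

lemma JJ_iteratedFDeriv {ψ : EuclideanSpace ℝ (Fin m) → ℝ} (hψ : Continuous ψ)
    (hψc : HasCompactSupport ψ) (θ : ℝ) {h : EuclideanSpace ℝ (Fin m) → F}
    (hh : ContDiff ℝ (⊤ : ℕ∞) h) (hc : HasCompactSupport h) (n : ℕ) :
    iteratedFDeriv ℝ n (JJ ψ θ h) = fun x => (1 - θ) ^ n • JJ ψ θ (iteratedFDeriv ℝ n h) x := by
  induction n with
  | zero => 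
    ext1 x
    rw [iteratedFDeriv_zero_eq_comp, iteratedFDeriv_zero_eq_comp]
    simp only [pow_zero, one_smul, Function.comp_apply, JJ]
    have := ((continuousMultilinearCurryFin0 ℝ (EuclideanSpace ℝ (Fin m)) F).symm.toContinuousLinearEquiv).integral_comp_comm (μ := MeasureTheory.volume) (fun p => ψ p • h ((1 - θ) • x + θ • p))
    simp only [map_smul] at this
    exact this.symm
  | succ n ih => 
    have hsm : ContDiff ℝ (⊤ : ℕ∞) (iteratedFDeriv ℝ n h) :=
      hh.iteratedFDeriv_right (by exact_mod_cast le_top)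
    have hcc : HasCompactSupport (iteratedFDeriv ℝ n h) := hc.iteratedFDeriv n
    ext1 x
    rw [iteratedFDeriv_succ_eq_comp_left, iteratedFDeriv_succ_eq_comp_left, ih]
    simp only [Function.comp_apply]
    have h1 := ((JJ_hasFDerivAt hψ hψc θ hsm hcc x).const_smul ((1 - θ) ^ n)).fderiv
    have h1' : fderiv ℝ (fun x => (1 - θ) ^ n • JJ ψ θ (iteratedFDeriv ℝ n h) x) x = _ := h1
    rw [h1', smul_smul, ← pow_succ, map_smul]
    congr 1
    simp only [JJ]
    have hl := lie_int (m := m) (A := EuclideanSpace ℝ (Fin m) →L[ℝ] EuclideanSpace ℝ (Fin m) [×n]→L[ℝ] F)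
      (B := EuclideanSpace ℝ (Fin m) [×(n+1)]→L[ℝ] F)
      (continuousMultilinearCurryLeftEquiv ℝ (fun _ : Fin (n+1) => EuclideanSpace ℝ (Fin m)) F).symm
      (fun p => ψ p • fderiv ℝ (iteratedFDeriv ℝ n h) ((1 - θ) • x + θ • p))
    refine hl.trans ?_
    simp only [map_smul]
    rfl

lemma JJ_contDiff {ψ : EuclideanSpace ℝ (Fin m) → ℝ} (hψ : Continuous ψ)
    (hψc : HasCompactSupport ψ) (θ : ℝ) {h : EuclideanSpace ℝ (Fin m) → F}
    (hh : ContDiff ℝ (⊤ : ℕ∞) h) (hc : HasCompactSupport h) :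
    ContDiff ℝ (⊤ : ℕ∞) (JJ ψ θ h) := by
  apply contDiff_of_differentiable_iteratedFDeriv
  intro n _
  rw [JJ_iteratedFDeriv hψ hψc θ hh hc n]
  have hsm : ContDiff ℝ (⊤ : ℕ∞) (iteratedFDeriv ℝ n h) :=
      hh.iteratedFDeriv_right (by exact_mod_cast le_top)
  have hcc : HasCompactSupport (iteratedFDeriv ℝ n h) := hc.iteratedFDeriv n
  intro x
  exact ((JJ_hasFDerivAt hψ hψc θ hsm hcc x).const_smul ((1 - θ) ^ n)).differentiableAt

lemma JJ_parts {ψ : EuclideanSpace ℝ (Fin m) → ℝ} (hψ : ContDiff ℝ (⊤ : ℕ∞) ψ)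
    (hψc : HasCompactSupport ψ) {θ : ℝ} (hθ : 0 < θ) {h : EuclideanSpace ℝ (Fin m) → F}
    (hh : ContDiff ℝ (⊤ : ℕ∞) h) (x v : EuclideanSpace ℝ (Fin m)) [CompleteSpace F] :
    JJ ψ θ (fderiv ℝ h) x v = - (θ⁻¹ • JJ (fun p => fderiv ℝ ψ p v) θ h x) := by
  have hd : Continuous (fderiv ℝ h) := hh.continuous_fderiv (by simp)
  have hdψ : Continuous (fderiv ℝ ψ) := hψ.continuous_fderiv (by simp)
  have hz : ∀ p, HasFDerivAt (fun p => h ((1 - θ) • x + θ • p))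
      (θ • fderiv ℝ h ((1 - θ) • x + θ • p)) p := by
    intro p
    have h1 : HasFDerivAt h (fderiv ℝ h ((1 - θ) • x + θ • p)) ((1 - θ) • x + θ • p) :=
      (hh.differentiable (by simp) _).hasFDerivAt
    have h2 : HasFDerivAt (fun p : EuclideanSpace ℝ (Fin m) => (1 - θ) • x + θ • p)
        (θ • ContinuousLinearMap.id ℝ _) p :=
      ((hasFDerivAt_id p).const_smul θ).const_add _
    have h3 := h1.comp p h2
    have e : (fderiv ℝ h ((1 - θ) • x + θ • p)).comp (θ • ContinuousLinearMap.id ℝ _)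
        = θ • fderiv ℝ h ((1 - θ) • x + θ • p) := by
      rw [ContinuousLinearMap.comp_smul, ContinuousLinearMap.comp_id]
    rw [e] at h3
    exact h3
  have hcv : Continuous (fun p => fderiv ℝ h ((1 - θ) • x + θ • p)) := hd.comp (by fun_prop)
  have h0 := integral_smul_fderiv_eq_neg_fderiv_smul_of_integrable (μ := MeasureTheory.volume)
    (f := ψ) (g := fun p => h ((1 - θ) • x + θ • p)) (v := v) ?_ ?_ ?_ ?_ ?_
  rotate_left
  · refine Continuous.integrable_of_hasCompactSupport ?_ ?_
    · exact (hdψ.clm_apply continuous_const).smul (hh.continuous.comp (by fun_prop))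
    · exact HasCompactSupport.smul_right (hψc.fderiv_apply (𝕜 := ℝ) v)
  · refine Continuous.integrable_of_hasCompactSupport ?_ hψc.smul_right
    refine hψ.continuous.smul ?_
    simp only [(hz _).fderiv]
    exact (hcv.clm_apply continuous_const).const_smul θ
  · exact JJ_integrable hψ.continuous hψc θ hh.continuous x
  · intro y _; exact hψ.differentiable (by simp) _
  · intro y _; exact (hz y).differentiableAt
  simp only [(hz _).fderiv] at h0
  have h4 : JJ ψ θ (fderiv ℝ h) x v = ∫ p, ψ p • fderiv ℝ h ((1 - θ) • x + θ • p) v := by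
    rw [JJ, ContinuousLinearMap.integral_apply]
    · rfl
    · exact JJ_integrable hψ.continuous hψc θ hd x
  have h5 : ∫ p, ψ p • (θ • fderiv ℝ h ((1 - θ) • x + θ • p)) v = 
    θ • ∫ p, ψ p • fderiv ℝ h ((1 - θ) • x + θ • p) v := by
    rw [← MeasureTheory.integral_smul]
    congr 1; ext1 p
    exact smul_comm _ _ _
  rw [h5] at h0
  rw [h4, ← smul_neg]
  change _ = θ⁻¹ • - ∫ _, _
  rw [← h0, smul_smul, inv_mul_cancel₀ hθ.ne', one_smul]

lemma JJ_smooth_bound (ρ : ℝ) (i : ℕ) : ∀ {ψ : EuclideanSpace ℝ (Fin m) → ℝ},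
    ContDiff ℝ (⊤ : ℕ∞) ψ → HasCompactSupport ψ → tsupport ψ ⊆ closedBall 0 ρ → 
    ∃ C : ℝ, 0 ≤ C ∧ ∀ {F : Type} [NormedAddCommGroup F] [NormedSpace ℝ F] [CompleteSpace F]
    (θ : ℝ) (_ : 0 < θ) (_ : θ ≤ 1) (h : EuclideanSpace ℝ (Fin m) → F)
    (_ : ContDiff ℝ (⊤ : ℕ∞) h) (_ : HasCompactSupport h) (x : EuclideanSpace ℝ (Fin m)) (B : ℝ)
    (_ : ∀ p ∈ closedBall (0 : EuclideanSpace ℝ (Fin m)) ρ, ‖h ((1 - θ) • x + θ • p)‖ ≤ B)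
    (_ : 0 ≤ B),
    ‖iteratedFDeriv ℝ i (JJ ψ θ h) x‖ ≤ C * θ⁻¹ ^ i * B := by
  induction i with
  | zero => 
    intro ψ hψ hψc hs
    refine ⟨∫ p, ‖ψ p‖, MeasureTheory.integral_nonneg fun p => norm_nonneg _, ?_⟩
    intro F _ _ _ θ hθ hθ1 h hh hc x B hB hB0
    rw [norm_iteratedFDeriv_zero, pow_zero, mul_one]
    exact JJ_norm_le hψ.continuous hψc θ x fun p hp => hB p (hs (subset_tsupport _ hp))
  | succ i ih => 
    intro ψ hψ hψc hs
    have hψa : ∀ a : Fin m, ContDiff ℝ (⊤ : ℕ∞) (fun p => fderiv ℝ ψ p (EuclideanSpace.single a 1)) :=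
      fun a => (hψ.fderiv_right (m := (⊤ : ℕ∞)) (by simp)).clm_apply contDiff_const
    have hψac : ∀ a : Fin m, HasCompactSupport (fun p => fderiv ℝ ψ p (EuclideanSpace.single a 1)) :=
      fun a => hψc.fderiv_apply (𝕜 := ℝ) _
    have hψas : ∀ a : Fin m, tsupport (fun p => fderiv ℝ ψ p (EuclideanSpace.single a 1)) ⊆ closedBall 0 ρ :=
      fun a => (tsupport_fderiv_apply_subset ℝ _).trans hs
    choose C hC0 hC using fun a => ih (hψa a) (hψac a) (hψas a)
    refine ⟨∑ a, ‖(EuclideanSpace.proj a : EuclideanSpace ℝ (Fin m) →L[ℝ] ℝ)‖ * C a,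
      Finset.sum_nonneg fun a _ => mul_nonneg (norm_nonneg _) (hC0 a), ?_⟩
    intro F _ _ _ θ hθ hθ1 h hh hc x B hB hB0
    set L : Fin m → F →L[ℝ] (EuclideanSpace ℝ (Fin m) →L[ℝ] F) := fun a =>
      ContinuousLinearMap.smulRightL ℝ (EuclideanSpace ℝ (Fin m)) F (EuclideanSpace.proj a) with hL
    have hLn : ∀ a, ‖L a‖ ≤ ‖(EuclideanSpace.proj a : EuclideanSpace ℝ (Fin m) →L[ℝ] ℝ)‖ := by
      intro a
      refine ContinuousLinearMap.opNorm_le_bound _ (norm_nonneg _) fun w => ?_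
      rw [hL]; simp [ContinuousLinearMap.norm_smulRight_apply]
    have hfd : fderiv ℝ (JJ ψ θ h) = fun x => ∑ a, (-((1 - θ) * θ⁻¹)) • 
        L a (JJ (fun p => fderiv ℝ ψ p (EuclideanSpace.single a 1)) θ h x) := by
      ext1 x
      rw [(JJ_hasFDerivAt hψ.continuous hψc θ hh hc x).fderiv]
      ext v
      have hv : v = ∑ a, v a • (EuclideanSpace.single a (1:ℝ)) := by
        ext b
        simp [Finset.sum_apply, Pi.single_apply]
      conv_lhs => rw [hv]
      rw [map_sum, sum_apply]
      refine Finset.sum_congr rfl fun a _ => ?_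
      rw [map_smul, smul_apply, JJ_parts hψ hψc hθ hh]
      change _ = (-((1 - θ) * θ⁻¹)) • (v a • JJ (fun p => fderiv ℝ ψ p (EuclideanSpace.single a 1)) θ h x)
      module
    rw [← norm_iteratedFDeriv_fderiv, hfd]
    have hJ : ∀ a, ContDiff ℝ (⊤ : ℕ∞) (JJ (fun p => fderiv ℝ ψ p (EuclideanSpace.single a 1)) θ h) :=
      fun a => JJ_contDiff (hψa a).continuous (hψac a) θ hh hc
    have hsum : (fun x => ∑ a, (-((1 - θ) * θ⁻¹)) • 
        L a (JJ (fun p => fderiv ℝ ψ p (EuclideanSpace.single a 1)) θ h x)) = ∑ a, fun x => (-((1 - θ) * θ⁻¹)) • 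
        L a (JJ (fun p => fderiv ℝ ψ p (EuclideanSpace.single a 1)) θ h x) := by
      ext1 x; rw [Finset.sum_apply]
    rw [hsum, iteratedFDeriv_sum_apply]
    · refine (norm_sum_le _ _).trans ?_
      rw [Finset.sum_mul, Finset.sum_mul]
      refine Finset.sum_le_sum fun a _ => ?_
      have h1 : iteratedFDeriv ℝ i (fun x => (-((1 - θ) * θ⁻¹)) • 
        L a (JJ (fun p => fderiv ℝ ψ p (EuclideanSpace.single a 1)) θ h x)) x = 
        (-((1 - θ) * θ⁻¹)) • iteratedFDeriv ℝ i (L a ∘ (JJ (fun p => fderiv ℝ ψ p (EuclideanSpace.single a 1)) θ h)) x := by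
        exact iteratedFDeriv_const_smul_apply' (((L a).contDiff.comp (hJ a)).of_le (by exact_mod_cast le_top)).contDiffAt
      rw [h1, norm_smul, norm_neg, Real.norm_of_nonneg (by have := inv_pos.2 hθ; have : 0 ≤ 1 - θ := by linarith
                                                           positivity)]
      have h2 := (L a).norm_iteratedFDeriv_comp_left (((hJ a).of_le (by exact_mod_cast le_top : ((i:ℕ∞):WithTop ℕ∞) ≤ (⊤ : ℕ∞))).contDiffAt (x := x)) le_rfl
      have h3 := hC a θ hθ hθ1 h hh hc x B hB hB0
      have h4 : (1 - θ) * θ⁻¹ ≤ θ⁻¹ := by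
        have := inv_pos.2 hθ
        nlinarith
      have := inv_pos.2 hθ
      calc (1 - θ) * θ⁻¹ * _ ≤ θ⁻¹ * (‖L a‖ * ‖iteratedFDeriv ℝ i (JJ (fun p => fderiv ℝ ψ p (EuclideanSpace.single a 1)) θ h) x‖) := by
            gcongr
        _ ≤ θ⁻¹ * (‖(EuclideanSpace.proj a : EuclideanSpace ℝ (Fin m) →L[ℝ] ℝ)‖ * (C a * θ⁻¹ ^ i * B)) := by
            have := hLn a
            gcongr
        _ = _ := by rw [pow_succ]; ring
    · intro a _
      exact ((((L a).contDiff.comp (hJ a)).const_smul _).of_le (by exact_mod_cast le_top)).contDiffAt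

lemma norm_iter_iter {E : Type} [NormedAddCommGroup E] [NormedSpace ℝ E] (n i : ℕ) :
    ∀ {F : Type} [NormedAddCommGroup F] [NormedSpace ℝ F] (u : E → F) (x : E),
    ‖iteratedFDeriv ℝ (n + i) u x‖ = ‖iteratedFDeriv ℝ i (iteratedFDeriv ℝ n u) x‖ := by
  induction n with
  | zero => 
    intro F _ _ u x
    rw [iteratedFDeriv_zero_eq_comp, LinearIsometryEquiv.norm_iteratedFDeriv_comp_left, zero_add]
  | succ n ih => 
    intro F _ _ u x
    have h1 : iteratedFDeriv ℝ (n+1) u = (continuousMultilinearCurryRightEquiv' ℝ n E F).symm ∘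
        iteratedFDeriv ℝ n (fderiv ℝ u) := by
      ext1 y; exact iteratedFDeriv_succ_eq_comp_right
    have h2 := LinearIsometryEquiv.norm_iteratedFDeriv_comp_left
      (continuousMultilinearCurryRightEquiv' ℝ n E F).symm (iteratedFDeriv ℝ n (fderiv ℝ u)) x i
    rw [h1]
    refine Eq.trans ?_ h2.symm
    rw [← ih, norm_iteratedFDeriv_fderiv,
      show n + 1 + i = n + i + 1 by omega]

lemma norm_iteratedDeriv_line {E : Type} [NormedAddCommGroup E] [NormedSpace ℝ E] {g : E → F}
    (hg : ContDiff ℝ (⊤ : ℕ∞) g) (x v : E) (q : ℕ) (u : ℝ) :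
    ‖iteratedDeriv q (fun u : ℝ => g (x + u • v)) u‖ ≤ ‖v‖ ^ q * ‖iteratedFDeriv ℝ q g (x + u • v)‖ := by
  rw [← norm_iteratedFDeriv_eq_norm_iteratedDeriv]
  have h1 : (fun u : ℝ => g (x + u • v)) = (fun w => g (x + w)) ∘ (ContinuousLinearMap.toSpanSingleton ℝ v) := by
    ext u; simp
  have hg' : ContDiff ℝ (⊤ : ℕ∞) (fun w => g (x + w)) := hg.comp (contDiff_const.add contDiff_id)
  rw [h1, ContinuousLinearMap.iteratedFDeriv_comp_right (i := q) (n := (⊤ : ℕ∞)) (f := fun w => g (x + w)) _ hg' _ (by exact_mod_cast le_top)]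
  refine (ContinuousMultilinearMap.norm_compContinuousLinearMap_le _ _).trans ?_
  rw [iteratedFDeriv_comp_add_left]
  simp [mul_comm]
end JJ


section P3
variable {m : ℕ} {r : ℝ}

lemma uniq_ball (hr : 0 < r) : UniqueDiffOn ℝ (closedBall (0 : EuclideanSpace ℝ (Fin m)) r) := by
  refine uniqueDiffOn_convex (convex_closedBall _ _) ?_
  rw [interior_closedBall _ hr.ne']
  exact ⟨0, by simpa using hr⟩

lemma within_eq {f : EuclideanSpace ℝ (Fin m) → ℝ} {x : EuclideanSpace ℝ (Fin m)} (hx : x ∈ ball 0 r) (e : ℕ) :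
    iteratedFDerivWithin ℝ e f (closedBall 0 r) x = iteratedFDeriv ℝ e f x := by
  rw [← iteratedFDerivWithin_univ]
  apply iteratedFDerivWithin_congr_set
  have : closedBall (0 : EuclideanSpace ℝ (Fin m)) r ∈ nhds x :=
    Filter.mem_of_superset (isOpen_ball.mem_nhds hx) ball_subset_closedBall
  filter_upwards [this] with y hy
  exact propext ⟨fun _ => trivial, fun _ => hy⟩

lemma hardy_within (hr : 0 < r) {f : EuclideanSpace ℝ (Fin m) → ℝ} (hf : FlatSmoothOnBall m r f)
    (N K : ℕ) (B : ℝ) (hB : 0 ≤ B)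
    (h : ∀ y ∈ closedBall (0 : EuclideanSpace ℝ (Fin m)) r,
      ‖iteratedFDerivWithin ℝ N f (closedBall 0 r) y‖ ≤ B * ‖y‖ ^ K) (d : ℕ) : ∀ e, e + d = N → 
    ∀ x ∈ closedBall (0 : EuclideanSpace ℝ (Fin m)) r,
      ‖iteratedFDerivWithin ℝ e f (closedBall 0 r) x‖ ≤ B * ‖x‖ ^ (d + K) := by
  induction d with
  | zero => 
    intro e he x hx
    obtain rfl : e = N := by omega
    simpa using h x hx
  | succ d ih => 
    intro e he x hx
    have hxr : ‖x‖ ≤ r := by simpa using hx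
    have hsub : closedBall (0 : EuclideanSpace ℝ (Fin m)) ‖x‖ ⊆ closedBall 0 r := closedBall_subset_closedBall hxr
    have hdiff : DifferentiableOn ℝ (iteratedFDerivWithin ℝ e f (closedBall 0 r)) (closedBall 0 r) :=
      hf.1.differentiableOn_iteratedFDerivWithin (by exact_mod_cast (ENat.natCast_lt_top e)) (uniq_ball hr)
    have key := (convex_closedBall (0 : EuclideanSpace ℝ (Fin m)) ‖x‖).norm_image_sub_le_of_norm_hasFDerivWithin_le
      (f := iteratedFDerivWithin ℝ e f (closedBall 0 r))
      (f' := fderivWithin ℝ (iteratedFDerivWithin ℝ e f (closedBall 0 r)) (closedBall 0 r))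
      (C := B * ‖x‖ ^ (d + K)) (x := 0) (y := x)
      (fun y hy => ((hdiff y (hsub hy)).hasFDerivWithinAt).mono hsub)
      (fun y hy => by
        rw [norm_fderivWithin_iteratedFDerivWithin]
        refine (ih (e+1) (by omega) y (hsub hy)).trans ?_
        have : ‖y‖ ≤ ‖x‖ := by simpa using hy
        gcongr) (by simp) (by simp)
    rw [hf.2 e, sub_zero, sub_zero] at key
    refine key.trans (le_of_eq ?_)
    rw [show d + 1 + K = d + K + 1 by omega, pow_succ]; ring

lemma flat_bdd_one (hr : 0 < r) {f : EuclideanSpace ℝ (Fin m) → ℝ} (hf : FlatSmoothOnBall m r f)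
    (e k : ℕ) : ∃ B, 0 ≤ B ∧ ∀ x ∈ closedBall (0 : EuclideanSpace ℝ (Fin m)) r,
      ‖iteratedFDerivWithin ℝ e f (closedBall 0 r) x‖ ≤ B * ‖x‖ ^ k := by
  have hc : ContinuousOn (iteratedFDerivWithin ℝ (e + k) f (closedBall 0 r)) (closedBall 0 r) :=
    hf.1.continuousOn_iteratedFDerivWithin (by exact_mod_cast le_top) (uniq_ball hr)
  obtain ⟨B, hB⟩ := (isCompact_closedBall (0 : EuclideanSpace ℝ (Fin m)) r).exists_bound_of_continuousOn hc
  have hB0 : 0 ≤ B := (norm_nonneg _).trans (hB 0 (by simpa using hr.le))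
  refine ⟨B, hB0, fun x hx => ?_⟩
  have := hardy_within hr hf (e + k) 0 B hB0 (fun y hy => by simpa using hB y hy) k e rfl x hx
  simpa using this

lemma flatNorm_bdd (hr : 0 < r) {f : EuclideanSpace ℝ (Fin m) → ℝ} (hf : FlatSmoothOnBall m r f)
    (n k : ℕ) : BddAbove (range fun p : (closedBall (0 : EuclideanSpace ℝ (Fin m)) r \ {0} :
      Set (EuclideanSpace ℝ (Fin m))) × Fin (n + 1) =>
    ‖(p.1 : EuclideanSpace ℝ (Fin m))‖ ^ (-(k : ℤ)) *
      ‖iteratedFDerivWithin ℝ p.2 f (closedBall 0 r) p.1‖) := by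
  choose B hB0 hB using fun e => flat_bdd_one hr hf e k
  refine ⟨∑ e : Fin (n+1), B e, ?_⟩
  rintro _ ⟨⟨⟨x, hx, hx0⟩, e⟩, rfl⟩
  have hxp : 0 < ‖x‖ := norm_pos_iff.2 hx0
  simp only [zpow_neg, zpow_natCast]
  have h1 : (‖x‖ ^ k)⁻¹ * ‖iteratedFDerivWithin ℝ (e:ℕ) f (closedBall 0 r) x‖ ≤ B e := by
    rw [inv_mul_le_iff₀ (by positivity), mul_comm]
    exact hB e x hx
  exact h1.trans (Finset.single_le_sum (f := fun e : Fin (n+1) => B e) (fun i _ => hB0 i) (Finset.mem_univ e))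

lemma flatNorm_nonneg (n k : ℕ) (f : EuclideanSpace ℝ (Fin m) → ℝ) : 0 ≤ flatNorm m r n k f :=
  Real.iSup_nonneg fun _ => mul_nonneg (zpow_nonneg (norm_nonneg _) _) (norm_nonneg _)

lemma flatNorm_spec (hr : 0 < r) {f : EuclideanSpace ℝ (Fin m) → ℝ} (hf : FlatSmoothOnBall m r f)
    (n k : ℕ) {e : ℕ} (he : e ≤ n) {x : EuclideanSpace ℝ (Fin m)} (hx : x ∈ closedBall 0 r) :
    ‖iteratedFDerivWithin ℝ e f (closedBall 0 r) x‖ ≤ flatNorm m r n k f * ‖x‖ ^ k := by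
  by_cases hx0 : x = 0
  · rw [hx0, hf.2 e, norm_zero]
    exact mul_nonneg (flatNorm_nonneg _ _ _) (by positivity)
  have hxp : 0 < ‖x‖ := norm_pos_iff.2 hx0
  have h := le_ciSup (flatNorm_bdd hr hf n k) (⟨⟨x, hx, hx0⟩, ⟨e, by omega⟩⟩ : (closedBall (0 : EuclideanSpace ℝ (Fin m)) r \ {0} :
      Set (EuclideanSpace ℝ (Fin m))) × Fin (n + 1))
  simp only [zpow_neg, zpow_natCast] at h
  rw [inv_mul_le_iff₀ (by positivity), mul_comm] at h
  refine h.trans (le_of_eq ?_)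
  simp only [flatNorm, zpow_neg, zpow_natCast]

lemma flatNorm_strong (hr : 0 < r) {f : EuclideanSpace ℝ (Fin m) → ℝ} (hf : FlatSmoothOnBall m r f)
    (n k : ℕ) {e : ℕ} (he : e ≤ n) {x : EuclideanSpace ℝ (Fin m)} (hx : x ∈ closedBall 0 r) :
    ‖iteratedFDerivWithin ℝ e f (closedBall 0 r) x‖ ≤ flatNorm m r n k f * ‖x‖ ^ (n - e + k) :=
  hardy_within hr hf n k _ (flatNorm_nonneg _ _ _) (fun y hy => flatNorm_spec hr hf n k le_rfl hy) (n - e) e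
    (by omega) x hx

lemma flatNorm_le (hr : 0 < r) {g : EuclideanSpace ℝ (Fin m) → ℝ}
    (hg : ContDiffOn ℝ (⊤ : ℕ∞) g (closedBall 0 r)) (n k : ℕ) {C : ℝ} (hC : 0 ≤ C)
    (h : ∀ x ∈ ball (0 : EuclideanSpace ℝ (Fin m)) r, x ≠ 0 → ∀ e ≤ n,
      ‖iteratedFDeriv ℝ e g x‖ ≤ C * ‖x‖ ^ k) : flatNorm m r n k g ≤ C := by
  refine Real.iSup_le ?_ hC
  rintro ⟨⟨x, hx, hx0⟩, e⟩
  have hxp : 0 < ‖x‖ := norm_pos_iff.2 hx0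
  simp only [zpow_neg, zpow_natCast]
  rw [inv_mul_le_iff₀ (by positivity), mul_comm]
  have hc : ContinuousOn (iteratedFDerivWithin ℝ e g (closedBall 0 r)) (closedBall 0 r) :=
    hg.continuousOn_iteratedFDerivWithin (by exact_mod_cast le_top) (uniq_ball hr)
  have hxr : ‖x‖ ≤ r := by simpa using hx
  have hu : Filter.Tendsto (fun j : ℕ => (1 - 1 / ((j : ℝ) + 2)) • x) Filter.atTop (nhds x) := by
    have h1 : Filter.Tendsto (fun j : ℕ => 1 / ((j : ℝ) + 2)) Filter.atTop (nhds 0) := by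
      have := (tendsto_one_div_add_atTop_nhds_zero_nat (𝕜 := ℝ)).comp (Filter.tendsto_add_atTop_nat 1)
      refine this.congr fun j => ?_
      simp only [Function.comp_apply]; push_cast; congr 1; ring
    have h2 : Filter.Tendsto (fun j : ℕ => (1 - 1 / ((j : ℝ) + 2)) • x) Filter.atTop (nhds ((1 - 0 : ℝ) • x)) :=
      (tendsto_const_nhds.sub h1).smul_const x
    simpa using h2
  have hub : ∀ j : ℕ, 0 < 1 - 1 / ((j : ℝ) + 2) ∧ 1 - 1 / ((j : ℝ) + 2) < 1 := by
    intro j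
    have h1 : 0 < 1 / ((j : ℝ) + 2) := by positivity
    have h2 : 1 / ((j : ℝ) + 2) < 1 := by
      rw [div_lt_one (by positivity)]
      have : (0:ℝ) ≤ j := by positivity
      linarith
    constructor <;> linarith
  have hun : ∀ j : ℕ, ‖(1 - 1 / ((j : ℝ) + 2)) • x‖ = (1 - 1 / ((j : ℝ) + 2)) * ‖x‖ := fun j => by
    rw [norm_smul, Real.norm_of_nonneg (hub j).1.le]
  have huball : ∀ j : ℕ, (1 - 1 / ((j : ℝ) + 2)) • x ∈ ball (0 : EuclideanSpace ℝ (Fin m)) r := fun j => by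
    rw [mem_ball_zero_iff, hun]
    have := hub j
    nlinarith
  have ht1 : Filter.Tendsto (fun j : ℕ => ‖iteratedFDerivWithin ℝ e g (closedBall 0 r) ((1 - 1 / ((j : ℝ) + 2)) • x)‖)
      Filter.atTop (nhds ‖iteratedFDerivWithin ℝ e g (closedBall 0 r) x‖) := by
    refine Filter.Tendsto.norm ?_
    refine (hc x hx).tendsto.comp ?_
    exact tendsto_nhdsWithin_iff.2 ⟨hu, Filter.Eventually.of_forall fun j => ball_subset_closedBall (huball j)⟩
  have ht2 : Filter.Tendsto (fun j : ℕ => C * ‖(1 - 1 / ((j : ℝ) + 2)) • x‖ ^ k) Filter.atTop (nhds (C * ‖x‖ ^ k)) :=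
    ((hu.norm).pow k).const_mul C
  refine le_of_tendsto_of_tendsto' ht1 ht2 fun j => ?_
  rw [within_eq (huball j)]
  refine h _ (huball j) ?_ e (by omega)
  exact smul_ne_zero (hub j).1.ne' hx0
end P3


section P4
variable {m : ℕ} {r : ℝ}

/-- base cutoff -/
noncomputable def kap (m : ℕ) {r : ℝ} (hr : 0 < r) : ContDiffBump (0 : EuclideanSpace ℝ (Fin m)) :=
  ⟨r, 2 * r, hr, by linarith⟩

/-- dyadic cutoff -/
noncomputable def kapi (hr : 0 < r) (i : ℕ) (x : EuclideanSpace ℝ (Fin m)) : ℝ :=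
  kap m hr ((2 : ℝ) ^ i • x)

/-- dyadic annulus cutoff -/
noncomputable def chii (hr : 0 < r) (i : ℕ) (x : EuclideanSpace ℝ (Fin m)) : ℝ :=
  kapi hr i x - kapi hr (i + 1) x

lemma kapi_contDiff (hr : 0 < r) (i : ℕ) :
    ContDiff ℝ (⊤ : ℕ∞) (kapi hr i : EuclideanSpace ℝ (Fin m) → ℝ) :=
  (kap m hr).contDiff.comp (contDiff_const_smul _)

lemma chii_contDiff (hr : 0 < r) (i : ℕ) :
    ContDiff ℝ (⊤ : ℕ∞) (chii hr i : EuclideanSpace ℝ (Fin m) → ℝ) :=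
  (kapi_contDiff hr i).sub (kapi_contDiff hr (i+1))

lemma norm_dil (i : ℕ) (x : EuclideanSpace ℝ (Fin m)) : ‖(2 : ℝ) ^ i • x‖ = 2 ^ i * ‖x‖ := by
  rw [norm_smul, Real.norm_of_nonneg (by positivity)]

lemma kapi_one (hr : 0 < r) {i : ℕ} {x : EuclideanSpace ℝ (Fin m)} (h : 2 ^ i * ‖x‖ ≤ r) :
    kapi hr i x = 1 := by
  apply ContDiffBump.one_of_mem_closedBall
  rw [mem_closedBall_zero_iff, norm_dil]; exact h

lemma kapi_zero (hr : 0 < r) {i : ℕ} {x : EuclideanSpace ℝ (Fin m)} (h : 2 * r ≤ 2 ^ i * ‖x‖) :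
    kapi hr i x = 0 := by
  apply ContDiffBump.zero_of_le_dist
  rw [dist_zero_right, norm_dil]; exact h

lemma kapi_deriv_zero (hr : 0 < r) {i : ℕ} {x : EuclideanSpace ℝ (Fin m)} (h : 2 * r < 2 ^ i * ‖x‖) (a : ℕ) :
    iteratedFDeriv ℝ a (kapi hr i : EuclideanSpace ℝ (Fin m) → ℝ) x = 0 := by
  have h1 : (kapi hr i : EuclideanSpace ℝ (Fin m) → ℝ) =ᶠ[nhds x] 0 := by
    have : ∀ᶠ y : EuclideanSpace ℝ (Fin m) in nhds x, 2 * r < 2 ^ i * ‖y‖ :=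
      (isOpen_lt continuous_const (by fun_prop)).mem_nhds h
    filter_upwards [this] with y hy
    exact kapi_zero hr hy.le
  rw [(h1.iteratedFDeriv ℝ a).self_of_nhds]
  exact congrFun iteratedFDeriv_fun_zero x

lemma chii_deriv_zero (hr : 0 < r) {i : ℕ} {x : EuclideanSpace ℝ (Fin m)}
    (h : ¬ (r ≤ 2 ^ (i+1) * ‖x‖ ∧ 2 ^ i * ‖x‖ ≤ 2 * r)) (a : ℕ) :
    iteratedFDeriv ℝ a (chii hr i : EuclideanSpace ℝ (Fin m) → ℝ) x = 0 := by
  have h1 : (chii hr i : EuclideanSpace ℝ (Fin m) → ℝ) =ᶠ[nhds x] 0 := by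
    by_cases h2 : 2 ^ i * ‖x‖ ≤ 2 * r
    · have h3 : 2 ^ (i+1) * ‖x‖ < r := by
        by_contra hc
        exact h ⟨not_lt.1 hc, h2⟩
      have : ∀ᶠ y : EuclideanSpace ℝ (Fin m) in nhds x, 2 ^ (i+1) * ‖y‖ < r :=
        (isOpen_lt (by fun_prop) continuous_const).mem_nhds h3
      filter_upwards [this] with y hy
      have h4 : 2 ^ i * ‖y‖ ≤ r := by
        rw [pow_succ] at hy
        have : 0 ≤ 2 ^ i * ‖y‖ := by positivity
        linarith
      simp [chii, kapi_one hr hy.le, kapi_one hr h4]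
    · rw [not_le] at h2
      have : ∀ᶠ y : EuclideanSpace ℝ (Fin m) in nhds x, 2 * r < 2 ^ i * ‖y‖ :=
        (isOpen_lt continuous_const (by fun_prop)).mem_nhds h2
      filter_upwards [this] with y hy
      have h4 : 2 * r ≤ 2 ^ (i+1) * ‖y‖ := by
        rw [pow_succ]
        have : 0 ≤ 2 ^ i * ‖y‖ := by positivity
        linarith
      simp [chii, kapi_zero hr hy.le, kapi_zero hr h4]
  rw [(h1.iteratedFDeriv ℝ a).self_of_nhds]
  exact congrFun iteratedFDeriv_fun_zero x

lemma dil_bound {φ : EuclideanSpace ℝ (Fin m) → ℝ} (hsm : ContDiff ℝ (⊤ : ℕ∞) φ) (a : ℕ) (c : ℝ) (hc : 0 ≤ c)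
    (x : EuclideanSpace ℝ (Fin m)) :
    ‖iteratedFDeriv ℝ a (fun y => φ (c • y)) x‖ ≤ c ^ a * ‖iteratedFDeriv ℝ a φ (c • x)‖ := by
  have h1 : (fun y => φ (c • y)) = φ ∘ (c • ContinuousLinearMap.id ℝ (EuclideanSpace ℝ (Fin m))) := by
    ext y; simp
  rw [h1, ContinuousLinearMap.iteratedFDeriv_comp_right (i := a) (n := (⊤ : ℕ∞)) _ hsm _ (by exact_mod_cast le_top)]
  refine (ContinuousMultilinearMap.norm_compContinuousLinearMap_le _ _).trans ?_
  have h3 : ‖(c • ContinuousLinearMap.id ℝ (EuclideanSpace ℝ (Fin m)))‖ ≤ c := by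
    rw [norm_smul, Real.norm_of_nonneg hc]
    exact mul_le_of_le_one_right hc ContinuousLinearMap.norm_id_le
  rw [Finset.prod_const, Finset.card_univ, Fintype.card_fin, mul_comm]
  exact mul_le_mul_of_nonneg_right (pow_le_pow_left₀ (norm_nonneg _) h3 a) (norm_nonneg _)

lemma cpt_bound {φ : EuclideanSpace ℝ (Fin m) → ℝ} (hsm : ContDiff ℝ (⊤ : ℕ∞) φ) (hφ : HasCompactSupport φ) (a : ℕ) :
    ∃ C, ∀ x, ‖x‖ ^ a * ‖iteratedFDeriv ℝ a φ x‖ ≤ C := by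
  have hcont : Continuous (iteratedFDeriv ℝ a φ) := hsm.continuous_iteratedFDeriv (by exact_mod_cast le_top)
  have hcs : HasCompactSupport (fun x => ‖iteratedFDeriv ℝ a φ x‖) := (hφ.iteratedFDeriv a).norm
  have hc2 : HasCompactSupport (fun x : EuclideanSpace ℝ (Fin m) => ‖x‖ ^ a * ‖iteratedFDeriv ℝ a φ x‖) :=
    HasCompactSupport.mul_left hcs
  obtain ⟨C, hC⟩ := Continuous.bounded_above_of_compact_support
    ((continuous_norm.pow a).mul hcont.norm) hc2
  exact ⟨C, fun x => (le_abs_self _).trans (hC x)⟩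

lemma kapi_bound_one (hr : 0 < r) (a : ℕ) : ∃ C, 0 ≤ C ∧ ∀ (i : ℕ) (x : EuclideanSpace ℝ (Fin m)),
    ‖x‖ ^ a * ‖iteratedFDeriv ℝ a (kapi hr i : EuclideanSpace ℝ (Fin m) → ℝ) x‖ ≤ C := by
  have hsm : ContDiff ℝ (⊤ : ℕ∞) (kap m hr) := (kap m hr).contDiff
  obtain ⟨C, hC⟩ := cpt_bound hsm (kap m hr).hasCompactSupport a
  refine ⟨C, le_trans (by positivity) (hC 0), fun i x => ?_⟩
  have h4 := hC ((2:ℝ)^i • x)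
  have h5 := dil_bound hsm a (2 ^ i) (by positivity) x
  rw [norm_dil] at h4
  refine le_trans ?_ h4
  refine (mul_le_mul_of_nonneg_left h5 (by positivity)).trans (le_of_eq ?_)
  rw [mul_pow]; ring

lemma kapi_bound (m : ℕ) (hr : 0 < r) (N : ℕ) : ∃ C, 1 ≤ C ∧ ∀ a ≤ N, ∀ (i : ℕ) (x : EuclideanSpace ℝ (Fin m)),
    ‖x‖ ^ a * ‖iteratedFDeriv ℝ a (kapi hr i : EuclideanSpace ℝ (Fin m) → ℝ) x‖ ≤ C := by
  choose C hC0 hC using fun a => kapi_bound_one (m := m) hr a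
  refine ⟨1 + ∑ a ∈ Finset.range (N+1), C a, ?_, ?_⟩
  · have := Finset.sum_nonneg (s := Finset.range (N+1)) (f := C) fun a _ => hC0 a
    linarith
  · intro a ha i x
    have := Finset.single_le_sum (s := Finset.range (N+1)) (f := C) (fun a _ => hC0 a) (Finset.mem_range.2 (by omega : a < N+1))
    linarith [hC a i x]

lemma chii_bound (m : ℕ) (hr : 0 < r) (N : ℕ) : ∃ C, 1 ≤ C ∧ ∀ a ≤ N, ∀ (i : ℕ) (x : EuclideanSpace ℝ (Fin m)),
    ‖x‖ ^ a * ‖iteratedFDeriv ℝ a (chii hr i : EuclideanSpace ℝ (Fin m) → ℝ) x‖ ≤ C := by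
  obtain ⟨C, hC1, hC⟩ := kapi_bound m hr N
  refine ⟨2 * C, by linarith, fun a ha i x => ?_⟩
  have h1 : iteratedFDeriv ℝ a (chii hr i : EuclideanSpace ℝ (Fin m) → ℝ) x = 
    iteratedFDeriv ℝ a (kapi hr i : EuclideanSpace ℝ (Fin m) → ℝ) x - iteratedFDeriv ℝ a (kapi hr (i+1) : EuclideanSpace ℝ (Fin m) → ℝ) x := by
    exact iteratedFDeriv_sub_apply (((kapi_contDiff hr i).of_le (by exact_mod_cast le_top)).contDiffAt)
      (((kapi_contDiff hr (i+1)).of_le (by exact_mod_cast le_top)).contDiffAt)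
  rw [h1]
  have h2 := norm_sub_le (iteratedFDeriv ℝ a (kapi hr i : EuclideanSpace ℝ (Fin m) → ℝ) x) (iteratedFDeriv ℝ a (kapi hr (i+1) : EuclideanSpace ℝ (Fin m) → ℝ) x)
  calc _ ≤ ‖x‖ ^ a * (_ + _) := by gcongr
    _ ≤ _ := by rw [mul_add]; linarith [hC a ha i x, hC a ha (i+1) x]

lemma chii_sum (hr : 0 < r) (I : ℕ) (x : EuclideanSpace ℝ (Fin m)) :
    ∑ i ∈ Finset.range I, chii hr i x = kapi hr 0 x - kapi hr I x := by
  simp only [chii]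
  exact Finset.sum_range_sub' (fun i => kapi hr i x) I

/-- weighted derivative bound at a point -/
def WW (u : EuclideanSpace ℝ (Fin m) → ℝ) (x : EuclideanSpace ℝ (Fin m)) (N K : ℕ) (B : ℝ) : Prop :=
  ∀ e ≤ N, ‖iteratedFDeriv ℝ e u x‖ ≤ B * ‖x‖ ^ (N - e + K)

lemma WW_mul {χ u : EuclideanSpace ℝ (Fin m) → ℝ} (hχ : ContDiff ℝ (⊤ : ℕ∞) χ)
    (hu : ContDiff ℝ (⊤ : ℕ∞) u) {x : EuclideanSpace ℝ (Fin m)} {N K : ℕ} {B C : ℝ} (hB : 0 ≤ B)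
    (hC : ∀ a ≤ N, ‖x‖ ^ a * ‖iteratedFDeriv ℝ a χ x‖ ≤ C) (hw : WW u x N K B) :
    WW (fun y => χ y * u y) x N K (2 ^ N * C * B) := by
  have hC0 : 0 ≤ C := le_trans (by positivity) (hC 0 (Nat.zero_le _))
  intro e he
  refine (norm_iteratedFDeriv_mul_le hχ hu x (n := e) (by exact_mod_cast le_top)).trans ?_
  calc _ ≤ ∑ a ∈ Finset.range (e+1), (e.choose a : ℝ) * (C * B * ‖x‖ ^ (N - e + K)) := by
        refine Finset.sum_le_sum fun a ha => ?_
        have ha' : a ≤ e := by simpa [Nat.lt_succ_iff] using ha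
        have h1 := hw (e - a) (by omega)
        have h2 := hC a (by omega)
        rw [mul_assoc]
        refine mul_le_mul_of_nonneg_left ?_ (by positivity)
        calc _ ≤ ‖iteratedFDeriv ℝ a χ x‖ * (B * ‖x‖ ^ (N - (e - a) + K)) := by gcongr
          _ = (‖x‖ ^ a * ‖iteratedFDeriv ℝ a χ x‖) * (B * ‖x‖ ^ (N - e + K)) := by
            rw [show N - (e - a) + K = a + (N - e + K) by omega, pow_add]; ring
          _ ≤ C * (B * ‖x‖ ^ (N - e + K)) := by gcongr
          _ = _ := by ring
    _ = 2 ^ e * (C * B * ‖x‖ ^ (N - e + K)) := by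
        rw [← Finset.sum_mul]
        congr 1
        exact_mod_cast Nat.sum_range_choose e
    _ ≤ 2 ^ N * (C * B * ‖x‖ ^ (N - e + K)) := by gcongr; norm_num
    _ = _ := by ring

lemma WW_add {u v : EuclideanSpace ℝ (Fin m) → ℝ} (hu : ContDiff ℝ (⊤ : ℕ∞) u) (hv : ContDiff ℝ (⊤ : ℕ∞) v)
    {x : EuclideanSpace ℝ (Fin m)} {N K : ℕ} {B C : ℝ} (h1 : WW u x N K B) (h2 : WW v x N K C) :
    WW (fun y => u y - v y) x N K (B + C) := by
  intro e he
  have : iteratedFDeriv ℝ e (fun y => u y - v y) x = iteratedFDeriv ℝ e u x - iteratedFDeriv ℝ e v x := 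
    iteratedFDeriv_sub_apply ((hu.of_le (by exact_mod_cast le_top)).contDiffAt)
      ((hv.of_le (by exact_mod_cast le_top)).contDiffAt)
  rw [this, add_mul]
  exact (norm_sub_le _ _).trans (add_le_add (h1 e he) (h2 e he))

lemma active_card (hr : 0 < r) {x : EuclideanSpace ℝ (Fin m)} (s : Finset ℕ)
    (h : ∀ i ∈ s, r ≤ 2 ^ (i+1) * ‖x‖ ∧ 2 ^ i * ‖x‖ ≤ 2 * r) : s.card ≤ 3 := by
  rcases s.eq_empty_or_nonempty with rfl | hs
  · simp
  have hsub : s ⊆ Finset.Icc (s.min' hs) (s.min' hs + 2) := by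
    intro i hi
    rw [Finset.mem_Icc]
    refine ⟨Finset.min'_le _ _ hi, ?_⟩
    have h1 := (h _ (Finset.min'_mem s hs)).1
    have h2 := (h i hi).2
    have hx : 0 < ‖x‖ := by
      by_contra hc
      have : ‖x‖ = 0 := le_antisymm (not_lt.1 hc) (norm_nonneg _)
      rw [this] at h1; simp at h1; linarith
    have h3 : (2:ℝ) ^ i * ‖x‖ ≤ 2 ^ (s.min' hs + 2) * ‖x‖ := by
      calc _ ≤ 2 * r := h2
        _ ≤ 2 * (2 ^ (s.min' hs+1) * ‖x‖) := by linarith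
        _ = _ := by ring
    have h4 := le_of_mul_le_mul_right h3 hx
    exact (pow_le_pow_iff_right₀ (by norm_num)).1 h4
  have := Finset.card_le_card hsub
  rw [Nat.card_Icc] at this
  omega

lemma WW_sum (hr : 0 < r) {u : ℕ → EuclideanSpace ℝ (Fin m) → ℝ} (I : ℕ) (hu : ∀ i, ContDiff ℝ (⊤ : ℕ∞) (u i))
    {x : EuclideanSpace ℝ (Fin m)} {N K : ℕ} {B C : ℝ} (hB : 0 ≤ B)
    (hC : ∀ a ≤ N, ∀ (i : ℕ), ‖x‖ ^ a * ‖iteratedFDeriv ℝ a (chii hr i : EuclideanSpace ℝ (Fin m) → ℝ) x‖ ≤ C)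
    (hw : ∀ i < I, r ≤ 2 ^ (i+1) * ‖x‖ → 2 ^ i * ‖x‖ ≤ 2 * r → WW (u i) x N K B) :
    WW (fun y => ∑ i ∈ Finset.range I, chii hr i y * u i y) x N K (3 * (2 ^ N * C * B)) := by
  classical
  have hC0 : 0 ≤ C := le_trans (by positivity) (hC 0 (Nat.zero_le _) 0)
  intro e he
  have hsum : (fun y => ∑ i ∈ Finset.range I, chii hr i y * u i y) = ∑ i ∈ Finset.range I, fun y => chii hr i y * u i y := by
    ext1 y; rw [Finset.sum_apply]
  rw [hsum, iteratedFDeriv_sum_apply]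
  swap
  · intro i _
    exact ((((chii_contDiff hr i).mul (hu i))).of_le (by exact_mod_cast le_top)).contDiffAt
  set s := (Finset.range I).filter (fun i => r ≤ 2 ^ (i+1) * ‖x‖ ∧ 2 ^ i * ‖x‖ ≤ 2 * r) with hs
  have hz : ∀ i ∈ Finset.range I, i ∉ s → iteratedFDeriv ℝ e (fun y => chii hr i y * u i y) x = 0 := by
    intro i hi his
    have hna : ¬ (r ≤ 2 ^ (i+1) * ‖x‖ ∧ 2 ^ i * ‖x‖ ≤ 2 * r) := fun hh => his (by rw [hs, Finset.mem_filter]; exact ⟨hi, hh⟩)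
    have h0 := norm_iteratedFDeriv_mul_le (chii_contDiff hr i) (hu i) x (n := e) (by exact_mod_cast le_top)
    rw [← norm_le_zero_iff]
    refine h0.trans (le_of_eq ?_)
    refine Finset.sum_eq_zero fun a _ => ?_
    rw [chii_deriv_zero hr hna]; simp
  rw [← Finset.sum_subset (Finset.filter_subset _ _) hz]
  refine (norm_sum_le _ _).trans ?_
  have hb : ∀ i ∈ s, ‖iteratedFDeriv ℝ e (fun y => chii hr i y * u i y) x‖ ≤ 2 ^ N * C * B * ‖x‖ ^ (N - e + K) := by
    intro i hi
    rw [hs, Finset.mem_filter, Finset.mem_range] at hi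
    exact WW_mul (chii_contDiff hr i) (hu i) hB (fun a ha => hC a ha i) (hw i hi.1 hi.2.1 hi.2.2) e he
  refine (Finset.sum_le_card_nsmul _ _ _ hb).trans ?_
  rw [nsmul_eq_mul, mul_assoc (3:ℝ)]
  have hcard : (s.card : ℝ) ≤ 3 := by
    have := active_card (x := x) hr s (fun i hi => by rw [hs, Finset.mem_filter] at hi; exact hi.2)
    exact_mod_cast this
  exact mul_le_mul_of_nonneg_right hcard (by positivity)
end P4


section P5
variable {m : ℕ} {r : ℝ}

/-- basic averaging scale -/
noncomputable def th0 (i : ℕ) (t : ℝ) : ℝ := (4 ^ i * t)⁻¹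
/-- maximal averaging scale -/
noncomputable def om (i : ℕ) : ℝ := (16 * 2 ^ i)⁻¹
/-- admissible scales -/
noncomputable def KK (i : ℕ) (t : ℝ) : Finset ℕ :=
  (Finset.range (⌊om i / th0 i t⌋₊ + 1)).filter (fun k => 2 ^ k * th0 i t ≤ om i)

/-- smoothing on annulus -/
noncomputable def TT (a : ℕ → ℝ) (ψ : EuclideanSpace ℝ (Fin m) → ℝ) (t : ℝ) (i : ℕ)
    (f : EuclideanSpace ℝ (Fin m) → ℝ) (x : EuclideanSpace ℝ (Fin m)) : ℝ :=
  ∑ k ∈ KK i t, a k * JJ ψ (2 ^ k * th0 i t) f x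

lemma th0_pos (i : ℕ) {t : ℝ} (ht : 1 ≤ t) : 0 < th0 i t := by
  unfold th0; positivity

lemma th0_le (i : ℕ) {t : ℝ} (ht : 1 ≤ t) : th0 i t ≤ 1 := by
  unfold th0
  apply inv_le_one_of_one_le₀
  have : (1:ℝ) ≤ 4 ^ i := one_le_pow₀ (by norm_num)
  nlinarith

lemma om_pos (i : ℕ) : 0 < om i := by unfold om; positivity

lemma om_le (i : ℕ) : om i ≤ 1 / 16 := by
  unfold om
  rw [one_div]
  apply inv_anti₀ (by norm_num)
  have : (1:ℝ) ≤ 2 ^ i := one_le_pow₀ (by norm_num)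
  linarith

lemma mem_KK (i : ℕ) {t : ℝ} (ht : 1 ≤ t) (k : ℕ) : k ∈ KK i t ↔ 2 ^ k * th0 i t ≤ om i := by
  unfold KK
  rw [Finset.mem_filter, Finset.mem_range]
  refine ⟨fun h => h.2, fun h => ⟨?_, h⟩⟩
  have h1 : (2:ℝ) ^ k ≤ om i / th0 i t := by rwa [le_div_iff₀ (th0_pos i ht)]
  have h2 : (k : ℝ) ≤ om i / th0 i t := by
    refine le_trans ?_ h1
    exact_mod_cast (Nat.lt_two_pow_self (n := k)).le
  have := Nat.le_floor h2
  omega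

lemma thk_bounds {i : ℕ} {t : ℝ} (ht : 1 ≤ t) {k : ℕ} (hk : k ∈ KK i t) :
    0 < 2 ^ k * th0 i t ∧ 2 ^ k * th0 i t ≤ om i ∧ 2 ^ k * th0 i t ≤ 1 / 16 := by
  have h := (mem_KK i ht k).1 hk
  exact ⟨mul_pos (by positivity) (th0_pos i ht), h, h.trans (om_le i)⟩

lemma z_norm_le {x p : EuclideanSpace ℝ (Fin m)} {θ : ℝ} (h0 : 0 ≤ θ) (h1 : θ ≤ 1) (hp : ‖p‖ ≤ r / 2) :
    ‖(1 - θ) • x + θ • p‖ ≤ (1 - θ) * ‖x‖ + θ * (r / 2) := by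
  refine (norm_add_le _ _).trans ?_
  rw [norm_smul, norm_smul, Real.norm_of_nonneg h0, Real.norm_of_nonneg (by linarith : 0 ≤ 1 - θ)]
  gcongr

lemma z_mem {x p : EuclideanSpace ℝ (Fin m)} {θ R : ℝ} (h0 : 0 ≤ θ) (h1 : θ ≤ 1) (hp : ‖p‖ ≤ r / 2)
    (hR : r / 2 < R) (hx : ‖x‖ < R) : ‖(1 - θ) • x + θ • p‖ < R := by
  refine (z_norm_le h0 h1 hp).trans_lt ?_
  rcases h0.eq_or_lt with rfl | h0
  · simpa using hx
  · nlinarith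

lemma z_two {x p : EuclideanSpace ℝ (Fin m)} {θ : ℝ} {i : ℕ} (h0 : 0 ≤ θ) (h1 : θ ≤ om i) (hp : ‖p‖ ≤ r / 2)
    (hr : 0 < r) (ha : r ≤ 2 ^ (i+1) * ‖x‖) : ‖(1 - θ) • x + θ • p‖ ≤ 2 * ‖x‖ := by
  refine (z_norm_le h0 (h1.trans ((om_le i).trans (by norm_num))) hp).trans ?_
  have h2 : om i * r ≤ ‖x‖ := by
    unfold om
    rw [inv_mul_le_iff₀ (by positivity)]
    rw [pow_succ] at ha
    have : 0 ≤ 2 ^ i * ‖x‖ := by positivity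
    nlinarith
  have h3 : θ * r ≤ om i * r := by gcongr
  have h4 : 0 ≤ θ * ‖x‖ := by positivity
  nlinarith [norm_nonneg x]

lemma TT_contDiff {a : ℕ → ℝ} {ψ : EuclideanSpace ℝ (Fin m) → ℝ} (hψ : Continuous ψ)
    (hψc : HasCompactSupport ψ) (t : ℝ) (i : ℕ) {h : EuclideanSpace ℝ (Fin m) → ℝ}
    (hh : ContDiff ℝ (⊤ : ℕ∞) h) (hc : HasCompactSupport h) : ContDiff ℝ (⊤ : ℕ∞) (TT a ψ t i h) := by
  unfold TT
  exact ContDiff.sum fun k _ => contDiff_const.mul (JJ_contDiff hψ hψc _ hh hc)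

lemma TT_iter {a : ℕ → ℝ} {ψ : EuclideanSpace ℝ (Fin m) → ℝ} (hψ : Continuous ψ)
    (hψc : HasCompactSupport ψ) (t : ℝ) (i : ℕ) {h : EuclideanSpace ℝ (Fin m) → ℝ}
    (hh : ContDiff ℝ (⊤ : ℕ∞) h) (hc : HasCompactSupport h) (e : ℕ) (x : EuclideanSpace ℝ (Fin m)) :
    iteratedFDeriv ℝ e (TT a ψ t i h) x =
      ∑ k ∈ KK i t, a k • iteratedFDeriv ℝ e (JJ ψ (2 ^ k * th0 i t) h) x := by
  have hsum : TT a ψ t i h = ∑ k ∈ KK i t, fun x => a k • JJ ψ (2 ^ k * th0 i t) h x := by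
    ext1 y; rw [Finset.sum_apply]; rfl
  have hd : ∀ k, ContDiffAt ℝ e (JJ ψ (2 ^ k * th0 i t) h) x := fun k =>
    ((JJ_contDiff hψ hψc _ hh hc).of_le (by exact_mod_cast le_top)).contDiffAt
  rw [hsum, iteratedFDeriv_sum_apply]
  · refine Finset.sum_congr rfl fun k _ => ?_
    exact iteratedFDeriv_const_smul_apply' (hd k)
  · intro k _
    exact (hd k).const_smul _

lemma sum_abs_le {a : ℕ → ℝ} (ha1 : ∀ q : ℕ, Summable (fun k => |a k| * (2 ^ k) ^ q)) (K : Finset ℕ) :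
    ∑ k ∈ K, |a k| ≤ ∑' k, |a k| := by
  have h := ha1 0
  simp only [pow_zero, mul_one] at h
  exact h.sum_le_tsum K fun k _ => abs_nonneg _

lemma JJ_mixed {ψ : EuclideanSpace ℝ (Fin m) → ℝ} (hψ : ContDiff ℝ (⊤ : ℕ∞) ψ)
    (hψc : HasCompactSupport ψ) (hs : tsupport ψ ⊆ closedBall 0 (r / 2)) (l : ℕ) :
    ∃ C : ℝ, 0 ≤ C ∧ ∀ e' ≤ l, ∀ (e : ℕ) (θ : ℝ) (_ : 0 < θ) (_ : θ ≤ 1) (h : EuclideanSpace ℝ (Fin m) → ℝ)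
    (_ : ContDiff ℝ (⊤ : ℕ∞) h) (_ : HasCompactSupport h) (x : EuclideanSpace ℝ (Fin m)) (B : ℝ)
    (_ : ∀ p : EuclideanSpace ℝ (Fin m), ‖p‖ ≤ r / 2 → ‖iteratedFDeriv ℝ e h ((1 - θ) • x + θ • p)‖ ≤ B)
    (_ : 0 ≤ B),
    ‖iteratedFDeriv ℝ (e + e') (JJ ψ θ h) x‖ ≤ C * θ⁻¹ ^ e' * B := by
  choose C hC0 hC using fun i => JJ_smooth_bound (m := m) (r / 2) i hψ hψc hs
  refine ⟨∑ i ∈ Finset.range (l+1), C i, Finset.sum_nonneg fun i _ => hC0 i, ?_⟩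
  intro e' he' e θ hθ hθ1 h hh hc x B hB hB0
  have hCl : C e' ≤ ∑ i ∈ Finset.range (l+1), C i :=
    Finset.single_le_sum (f := C) (fun i _ => hC0 i) (Finset.mem_range.2 (by omega))
  have hsm : ContDiff ℝ (⊤ : ℕ∞) (iteratedFDeriv ℝ e h) :=
      hh.iteratedFDeriv_right (by exact_mod_cast le_top)
  have hcc : HasCompactSupport (iteratedFDeriv ℝ e h) := hc.iteratedFDeriv e
  have h1 := hC e' θ hθ hθ1 (iteratedFDeriv ℝ e h) hsm hcc x B (fun p hp => hB p (by simpa using hp)) hB0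
  rw [norm_iter_iter, JJ_iteratedFDeriv hψ.continuous hψc θ hh hc e]
  have h2 : iteratedFDeriv ℝ e' (fun x => (1 - θ) ^ e • JJ ψ θ (iteratedFDeriv ℝ e h) x) x
      = (1 - θ) ^ e • iteratedFDeriv ℝ e' (JJ ψ θ (iteratedFDeriv ℝ e h)) x :=
    iteratedFDeriv_const_smul_apply' (((JJ_contDiff hψ.continuous hψc θ hsm hcc).of_le (by exact_mod_cast le_top)).contDiffAt)
  rw [h2, norm_smul]
  have h3 : ‖(1 - θ) ^ e‖ ≤ 1 := by
    rw [norm_pow, Real.norm_of_nonneg (by linarith)]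
    exact pow_le_one₀ (by linarith) (by linarith)
  have := inv_pos.2 hθ
  calc _ ≤ 1 * (C e' * θ⁻¹ ^ e' * B) := by gcongr
    _ ≤ _ := by rw [one_mul]; gcongr

lemma T1 (hr : 0 < r) {a : ℕ → ℝ} (ha1 : ∀ q : ℕ, Summable (fun k => |a k| * (2 ^ k) ^ q))
    {ψ : EuclideanSpace ℝ (Fin m) → ℝ} (hψ : ContDiff ℝ (⊤ : ℕ∞) ψ)
    (hψc : HasCompactSupport ψ) (hs : tsupport ψ ⊆ closedBall 0 (r / 2)) (n k l : ℕ) :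
    ∃ C : ℝ, 0 ≤ C ∧ ∀ (h : EuclideanSpace ℝ (Fin m) → ℝ) (_ : ContDiff ℝ (⊤ : ℕ∞) h)
      (_ : HasCompactSupport h) (R B t : ℝ) (_ : 0 ≤ B) (_ : 1 ≤ t) (_ : r / 2 < R) (_ : R ≤ r) (i : ℕ)
      (x : EuclideanSpace ℝ (Fin m)) (_ : ‖x‖ < R) (_ : r ≤ 2 ^ (i+1) * ‖x‖) (_ : 2 ^ i * ‖x‖ ≤ 2 * r)
      (_ : ∀ y : EuclideanSpace ℝ (Fin m), ‖y‖ < R → ∀ e ≤ n, 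
        ‖iteratedFDeriv ℝ e h y‖ ≤ B * ‖y‖ ^ (n - e + (k + 2 * l))),
      WW (TT a ψ t i h) x (n + l) k (C * t ^ l * B) := by
  obtain ⟨C, hC0, hC⟩ := JJ_mixed hψ hψc hs l
  have hA0 : 0 ≤ ∑' k, |a k| := tsum_nonneg fun k => abs_nonneg _
  refine ⟨(∑' k, |a k|) * C * 2 ^ (n + k + 2 * l) * (1 + 4 * r ^ 2) ^ l * (1 + r) ^ l, by positivity, ?_⟩
  intro h hh hc R B t hB ht hR1 hR2 i x hx hact1 hact2 hb e he
  obtain ⟨e0, e', he0, hsum, he'l⟩ : ∃ e0 e', e0 ≤ n ∧ e0 + e' = e ∧ e' ≤ l :=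
    ⟨min e n, e - min e n, by omega, by omega, by omega⟩
  subst hsum
  rw [TT_iter hψ.continuous hψc t i hh hc]
  have hx0 : 0 ≤ ‖x‖ := norm_nonneg x
  set Q := n - e0 + (k + 2 * l) with hQ
  have hterm : ∀ κ ∈ KK i t, ‖a κ • iteratedFDeriv ℝ (e0 + e') (JJ ψ (2 ^ κ * th0 i t) h) x‖ ≤
      |a κ| * (C * (4 ^ i * t) ^ e' * (B * (2 * ‖x‖) ^ Q)) := by
    intro κ hκ
    obtain ⟨hθ0, hθω, hθ1⟩ := thk_bounds ht hκ
    have hθ1' : 2 ^ κ * th0 i t ≤ 1 := hθ1.trans (by norm_num)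
    rw [norm_smul, Real.norm_eq_abs]
    refine mul_le_mul_of_nonneg_left ?_ (abs_nonneg _)
    refine (hC e' he'l e0 _ hθ0 hθ1' h hh hc x (B * (2 * ‖x‖) ^ Q) ?_ (by positivity)).trans ?_
    · intro p hp
      refine (hb _ (z_mem hθ0.le hθ1' hp hR1 hx) e0 he0).trans ?_
      have := z_two hθ0.le hθω hp hr hact1
      gcongr
    · have h1 : (2 ^ κ * th0 i t)⁻¹ ≤ 4 ^ i * t := by
        rw [inv_le_comm₀ hθ0 (by positivity)]
        change th0 i t ≤ _
        have h1 : (1:ℝ) ≤ 2 ^ κ := one_le_pow₀ (by norm_num)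
        have h2 := th0_pos i ht
        nlinarith
      have h2 := inv_pos.2 hθ0
      gcongr
  refine (norm_sum_le_of_le _ hterm).trans ?_
  rw [← Finset.sum_mul]
  have hx4 : 4 ^ i * ‖x‖ ^ 2 ≤ 4 * r ^ 2 := by
    calc (4:ℝ) ^ i * ‖x‖ ^ 2 = (2 ^ i * ‖x‖) ^ 2 := by
          rw [mul_pow, ← pow_mul, mul_comm i 2, pow_mul]; norm_num
      _ ≤ (2 * r) ^ 2 := by gcongr
      _ = _ := by ring
  have hQe : Q = 2 * e' + (l - e') + (n + l - (e0 + e') + k) := by omega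
  have hxr : ‖x‖ ≤ r := hx.le.trans hR2
  have k1 : (4 ^ i * t) ^ e' * (2 * ‖x‖) ^ Q ≤
      2 ^ (n + k + 2 * l) * (1 + 4 * r ^ 2) ^ l * (1 + r) ^ l * t ^ l * ‖x‖ ^ (n + l - (e0 + e') + k) := by
    calc (4 ^ i * t) ^ e' * (2 * ‖x‖) ^ Q = 2 ^ Q * (4 ^ i * ‖x‖ ^ 2) ^ e' * ‖x‖ ^ (l - e') * t ^ e' *
          ‖x‖ ^ (n + l - (e0 + e') + k) := by
          rw [mul_pow, mul_pow, mul_pow]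
          conv_lhs => rw [show ‖x‖ ^ Q = ‖x‖ ^ (2 * e' + (l - e') + (n + l - (e0 + e') + k)) by rw [← hQe]]
          rw [pow_add, pow_add, pow_mul]; ring
      _ ≤ 2 ^ (n + k + 2 * l) * (1 + 4 * r ^ 2) ^ l * (1 + r) ^ l * t ^ l *
          ‖x‖ ^ (n + l - (e0 + e') + k) := by
          have q1 : (2:ℝ) ^ Q ≤ 2 ^ (n + k + 2 * l) := pow_le_pow_right₀ (by norm_num) (by omega)
          have q2 : (4 ^ i * ‖x‖ ^ 2) ^ e' ≤ (1 + 4 * r ^ 2) ^ l :=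
            (pow_le_pow_left₀ (by positivity) (by linarith : 4 ^ i * ‖x‖ ^ 2 ≤ 1 + 4 * r ^ 2) e').trans
              (pow_le_pow_right₀ (by nlinarith) he'l)
          have q3 : ‖x‖ ^ (l - e') ≤ (1 + r) ^ l :=
            (pow_le_pow_left₀ (by positivity) (by linarith : ‖x‖ ≤ 1 + r) _).trans
              (pow_le_pow_right₀ (by linarith) (by omega))
          have q4 : t ^ e' ≤ t ^ l := pow_le_pow_right₀ ht he'l
          gcongr
  calc (∑ κ ∈ KK i t, |a κ|) * (C * (4 ^ i * t) ^ e' * (B * (2 * ‖x‖) ^ Q)) 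
      ≤ (∑' κ, |a κ|) * (C * (4 ^ i * t) ^ e' * (B * (2 * ‖x‖) ^ Q)) := by
        refine mul_le_mul_of_nonneg_right (sum_abs_le ha1 _) (by positivity)
    _ = (∑' κ, |a κ|) * C * B * ((4 ^ i * t) ^ e' * (2 * ‖x‖) ^ Q) := by ring
    _ ≤ (∑' κ, |a κ|) * C * B * (2 ^ (n + k + 2 * l) * (1 + 4 * r ^ 2) ^ l * (1 + r) ^ l * t ^ l * ‖x‖ ^ (n + l - (e0 + e') + k)) := by
        gcongr
    _ = _ := by ring
end P5


section P6
variable {m : ℕ} {r : ℝ}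

lemma T2_repr {a : ℕ → ℝ} {ψ : EuclideanSpace ℝ (Fin m) → ℝ} (hψ : Continuous ψ)
    (hψc : HasCompactSupport ψ) (hψ1 : ∫ p, ψ p = 1) (t : ℝ) (i : ℕ) {h : EuclideanSpace ℝ (Fin m) → ℝ}
    (hh : ContDiff ℝ (⊤ : ℕ∞) h) (hc : HasCompactSupport h) (e : ℕ) (x : EuclideanSpace ℝ (Fin m)) :
    iteratedFDeriv ℝ e (fun y => TT a ψ t i h y - h y) x =
      ∫ p, ψ p • (∑ k ∈ KK i t, (a k * (1 - 2 ^ k * th0 i t) ^ e) •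
        iteratedFDeriv ℝ e h (x + (2 ^ k * th0 i t) • (p - x)) - iteratedFDeriv ℝ e h (x + (0 : ℝ) • (p - x))) := by
  have hcont : Continuous (iteratedFDeriv ℝ e h) := hh.continuous_iteratedFDeriv (by exact_mod_cast le_top)
  have h1 : iteratedFDeriv ℝ e (fun y => TT a ψ t i h y - h y) x =
      iteratedFDeriv ℝ e (TT a ψ t i h) x - iteratedFDeriv ℝ e h x :=
    iteratedFDeriv_sub_apply (((TT_contDiff hψ hψc t i hh hc).of_le (by exact_mod_cast le_top)).contDiffAt)
      ((hh.of_le (by exact_mod_cast le_top)).contDiffAt)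
  have hz : ∀ (θ : ℝ) (p : EuclideanSpace ℝ (Fin m)), x + θ • (p - x) = (1 - θ) • x + θ • p := by
    intro θ p; module
  have hInt : ∀ k, MeasureTheory.Integrable (fun p => (a k * (1 - 2 ^ k * th0 i t) ^ e) • (ψ p •
      iteratedFDeriv ℝ e h ((1 - 2 ^ k * th0 i t) • x + (2 ^ k * th0 i t) • p))) := fun k =>
    MeasureTheory.Integrable.fun_smul (a k * (1 - 2 ^ k * th0 i t) ^ e) (JJ_integrable hψ hψc (2 ^ k * th0 i t) hcont x)
  have hInt0 : MeasureTheory.Integrable (fun p => ψ p • iteratedFDeriv ℝ e h x) :=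
    (hψ.integrable_of_hasCompactSupport hψc).smul_const _
  rw [h1, TT_iter hψ hψc t i hh hc]
  have h2 : ∀ p, ψ p • (∑ k ∈ KK i t, (a k * (1 - 2 ^ k * th0 i t) ^ e) •
        iteratedFDeriv ℝ e h (x + (2 ^ k * th0 i t) • (p - x)) - iteratedFDeriv ℝ e h (x + (0 : ℝ) • (p - x))) =
      (∑ k ∈ KK i t, (a k * (1 - 2 ^ k * th0 i t) ^ e) • (ψ p •
        iteratedFDeriv ℝ e h ((1 - 2 ^ k * th0 i t) • x + (2 ^ k * th0 i t) • p))) - ψ p • iteratedFDeriv ℝ e h x := by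
    intro p
    rw [zero_smul, add_zero, smul_sub, Finset.smul_sum]
    congr 1
    refine Finset.sum_congr rfl fun k _ => ?_
    rw [hz, smul_comm]
  simp_rw [h2]
  rw [MeasureTheory.integral_sub (MeasureTheory.integrable_finsetSum _ fun k _ => hInt k) hInt0,
    MeasureTheory.integral_finsetSum _ fun k _ => hInt k, integral_smul_const, hψ1, one_smul]
  congr 1
  refine Finset.sum_congr rfl fun k _ => ?_
  rw [MeasureTheory.integral_smul, JJ_iteratedFDeriv hψ hψc _ hh hc e, smul_smul]
  rfl

lemma T2 (hr : 0 < r) {a : ℕ → ℝ} (ha1 : ∀ q : ℕ, Summable (fun k => |a k| * (2 ^ k) ^ q))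
    (ha : ∀ q : ℕ, HasSum (fun k => a k * (2 ^ k) ^ q) (if q = 0 then 1 else 0))
    {ψ : EuclideanSpace ℝ (Fin m) → ℝ} (hψ : ContDiff ℝ (⊤ : ℕ∞) ψ)
    (hψc : HasCompactSupport ψ) (hs : tsupport ψ ⊆ closedBall 0 (r / 2)) (hψ1 : ∫ p, ψ p = 1) (n k l : ℕ) :
    ∃ C : ℝ, 0 ≤ C ∧ ∀ (h : EuclideanSpace ℝ (Fin m) → ℝ) (_ : ContDiff ℝ (⊤ : ℕ∞) h)
      (_ : HasCompactSupport h) (R B t : ℝ) (_ : 0 ≤ B) (_ : 1 ≤ t) (_ : r / 2 < R) (_ : R ≤ r) (i : ℕ)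
      (x : EuclideanSpace ℝ (Fin m)) (_ : ‖x‖ < R) (_ : r ≤ 2 ^ (i+1) * ‖x‖) (_ : 2 ^ i * ‖x‖ ≤ 2 * r)
      (_ : ∀ y : EuclideanSpace ℝ (Fin m), ‖y‖ < R → ∀ e ≤ n + l, 
        ‖iteratedFDeriv ℝ e h y‖ ≤ B * ‖y‖ ^ (n + l - e + k)),
      WW (fun y => TT a ψ t i h y - h y) x n (k + 2 * l) (C * t⁻¹ ^ l * B) := by
  choose C hC0 hC using fun e => sum_lemma ha1 ha l e
  set P := ∫ p, ‖ψ p‖ with hP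
  have hP0 : 0 ≤ P := MeasureTheory.integral_nonneg fun p => norm_nonneg _
  set C' := ∑ e ∈ Finset.range (n+1), C e with hC'
  have hC'0 : 0 ≤ C' := Finset.sum_nonneg fun e _ => (hC0 e).le
  refine ⟨P * C' * (4 / r ^ 2) ^ l * (32 * r) ^ l * 2 ^ (n + k), by positivity, ?_⟩
  intro h hh hc R B t hB ht hR1 hR2 i x hx hact1 hact2 hb e he
  have hCe : C e ≤ C' := Finset.single_le_sum (f := C) (fun i _ => (hC0 i).le) (Finset.mem_range.2 (by omega))
  have hx0 : 0 ≤ ‖x‖ := norm_nonneg x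
  have hxr : ‖x‖ ≤ r := hx.le.trans hR2
  have hxω : ‖x‖ ≤ 32 * r * om i := by
    unfold om
    rw [← div_eq_mul_inv, le_div_iff₀ (by positivity)]
    nlinarith
  rw [T2_repr hψ.continuous hψc hψ1 t i hh hc]
  set M := (32 * r) ^ l * (B * (2 * ‖x‖) ^ (n - e + k)) with hM
  have hM0 : 0 ≤ M := by positivity
  have hsm : ContDiff ℝ (⊤ : ℕ∞) (iteratedFDeriv ℝ e h) :=
      hh.iteratedFDeriv_right (by exact_mod_cast le_top)
  have hkey : ∀ p, ψ p ≠ 0 → ‖∑ k ∈ KK i t, (a k * (1 - 2 ^ k * th0 i t) ^ e) •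
        iteratedFDeriv ℝ e h (x + (2 ^ k * th0 i t) • (p - x)) - iteratedFDeriv ℝ e h (x + (0 : ℝ) • (p - x))‖
        ≤ C e * th0 i t ^ l * M := by
    intro p hp
    have hp : ‖p‖ ≤ r / 2 := by simpa using hs (subset_tsupport _ hp)
    have hpx : ‖p - x‖ ≤ 2 * r := (norm_sub_le _ _).trans (by linarith)
    have hz : ∀ (θ : ℝ), x + θ • (p - x) = (1 - θ) • x + θ • p := by
      intro θ; module
    refine hC e (fun u => iteratedFDeriv ℝ e h (x + u • (p - x))) ?_ (om i) M (th0 i t) (om_pos i) (th0_pos i ht)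
      (th0_le i ht) ?_ ?_ (KK i t) (mem_KK i ht)
    · exact hsm.comp (contDiff_const.add (contDiff_id.smul contDiff_const))
    · intro u hu
      refine (norm_iteratedDeriv_line hsm x (p - x) l u).trans ?_
      rw [← norm_iter_iter, hz]
      have hu1 : u ≤ 1 := hu.2.trans ((om_le i).trans (by norm_num))
      have h1 := hb _ (z_mem hu.1 hu1 hp hR1 hx) (e + l) (by omega)
      rw [show n + l - (e + l) + k = n - e + k by omega] at h1
      have h2 := z_two hu.1 hu.2 hp hr hact1
      calc _ ≤ (32 * r) ^ l * (B * ‖(1 - u) • x + u • p‖ ^ (n - e + k)) := by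
            gcongr
            linarith
        _ ≤ _ := by rw [hM]; gcongr
    · intro q hq
      refine (norm_iteratedDeriv_line hsm x (p - x) q 0).trans ?_
      rw [← norm_iter_iter, zero_smul, add_zero]
      have h1 := hb _ hx (e + q) (by omega)
      rw [show n + l - (e + q) + k = (l - q) + (n - e + k) by omega] at h1
      have hω := om_pos i
      calc _ ≤ (32 * r) ^ q * (B * ‖x‖ ^ ((l - q) + (n - e + k))) := by
            gcongr
            linarith
        _ = (32 * r) ^ q * ‖x‖ ^ (l - q) * (B * ‖x‖ ^ (n - e + k)) := by rw [pow_add]; ring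
        _ ≤ (32 * r) ^ q * (32 * r * om i) ^ (l - q) * (B * (2 * ‖x‖) ^ (n - e + k)) := by
            gcongr
            linarith
        _ = om i ^ (l - q) * ((32 * r) ^ (q + (l - q)) * (B * (2 * ‖x‖) ^ (n - e + k))) := by
            rw [mul_pow _ (om i), pow_add]; ring
        _ = _ := by rw [hM, show q + (l - q) = l by omega]
  have hnorm : ‖∫ p, ψ p • (∑ k ∈ KK i t, (a k * (1 - 2 ^ k * th0 i t) ^ e) •
        iteratedFDeriv ℝ e h (x + (2 ^ k * th0 i t) • (p - x)) - iteratedFDeriv ℝ e h (x + (0 : ℝ) • (p - x)))‖ ≤ 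
        P * (C e * th0 i t ^ l * M) := by
    rw [hP, ← MeasureTheory.integral_mul_const]
    refine MeasureTheory.norm_integral_le_of_norm_le ?_ ?_
    · exact ((hψ.continuous.integrable_of_hasCompactSupport hψc).norm).mul_const _
    · refine Filter.Eventually.of_forall fun p => ?_
      rw [norm_smul]
      by_cases hp : ψ p = 0
      · simp [hp]
      · exact mul_le_mul_of_nonneg_left (hkey p hp) (norm_nonneg _)
  refine hnorm.trans ?_
  have hth : th0 i t ≤ 4 / r ^ 2 * ‖x‖ ^ 2 * t⁻¹ := by
    unfold th0
    rw [mul_inv]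
    have ht' : 0 ≤ t⁻¹ := by positivity
    refine mul_le_mul_of_nonneg_right ?_ ht'
    have h4 : (4:ℝ) ^ i = 2 ^ i * 2 ^ i := by rw [← mul_pow]; norm_num
    have h5 : r ^ 2 ≤ 4 * 4 ^ i * ‖x‖ ^ 2 := by
      calc r ^ 2 ≤ (2 ^ (i+1) * ‖x‖) ^ 2 := by gcongr
        _ = _ := by rw [h4]; ring
    rw [inv_le_iff_one_le_mul₀ (by positivity), div_mul_eq_mul_div, div_mul_eq_mul_div, le_div_iff₀ (by positivity)]
    linarith
  have hth' := pow_le_pow_left₀ (th0_pos i ht).le hth l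
  have hth0p : 0 ≤ th0 i t ^ l := pow_nonneg (th0_pos i ht).le l
  calc P * (C e * th0 i t ^ l * M) ≤ P * (C' * (4 / r ^ 2 * ‖x‖ ^ 2 * t⁻¹) ^ l * M) := by gcongr
    _ = P * C' * (4 / r ^ 2) ^ l * (32 * r) ^ l * 2 ^ (n - e + k) * t⁻¹ ^ l * B * ‖x‖ ^ (n - e + (k + 2 * l)) := by
        rw [hM, mul_pow, mul_pow, mul_pow 2 ‖x‖, ← pow_mul, show n - e + (k + 2 * l) = 2 * l + (n - e + k) by omega, pow_add ‖x‖]; ring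
    _ ≤ P * C' * (4 / r ^ 2) ^ l * (32 * r) ^ l * 2 ^ (n + k) * t⁻¹ ^ l * B * ‖x‖ ^ (n - e + (k + 2 * l)) := by
        have : (2:ℝ) ^ (n - e + k) ≤ 2 ^ (n + k) := pow_le_pow_right₀ (by norm_num) (by omega)
        gcongr
    _ = _ := by ring
end P6


section P7
variable {m : ℕ} {r : ℝ}

lemma ext_h {f : EuclideanSpace ℝ (Fin m) → ℝ} (hf : ContDiffOn ℝ (⊤ : ℕ∞) f (closedBall 0 r)) {R : ℝ}
    (hR0 : 0 < R) (hR : R < r) : ∃ h : EuclideanSpace ℝ (Fin m) → ℝ, ContDiff ℝ (⊤ : ℕ∞) h ∧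
      HasCompactSupport h ∧ ∀ x, ‖x‖ ≤ R → h x = f x := by
  let b : ContDiffBump (0 : EuclideanSpace ℝ (Fin m)) := ⟨R, (R + r) / 2, hR0, by linarith⟩
  refine ⟨fun x => b x * f x, ?_, b.hasCompactSupport.mul_right, ?_⟩
  · rw [contDiff_iff_contDiffAt]
    intro x
    by_cases hx : ‖x‖ < r
    · refine b.contDiff.contDiffAt.mul (hf.contDiffAt ?_)
      exact Filter.mem_of_superset (isOpen_ball.mem_nhds (by simpa using hx)) ball_subset_closedBall
    · have h1 : (fun x => b x * f x) =ᶠ[nhds x] fun _ => 0 := by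
        have : ∀ᶠ y : EuclideanSpace ℝ (Fin m) in nhds x, (R + r) / 2 < ‖y‖ :=
          (isOpen_lt continuous_const continuous_norm).mem_nhds (by rw [mem_ofPred_eq]; linarith)
        filter_upwards [this] with y hy
        rw [b.zero_of_le_dist (by rw [dist_zero_right]; exact hy.le), zero_mul]
      exact contDiffAt_const.congr_of_eventuallyEq h1
  · intro x hx
    have : b x = 1 := b.one_of_mem_closedBall (by simpa using hx)
    simp [this]

lemma psi_zero {ψ : EuclideanSpace ℝ (Fin m) → ℝ} (hs : tsupport ψ ⊆ closedBall 0 (r / 2))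
    {p : EuclideanSpace ℝ (Fin m)} (hp : ψ p ≠ 0) : ‖p‖ ≤ r / 2 := by
  simpa using hs (subset_tsupport ψ hp)

lemma TT_congr {a : ℕ → ℝ} {ψ : EuclideanSpace ℝ (Fin m) → ℝ} (hs : tsupport ψ ⊆ closedBall 0 (r / 2))
    {t : ℝ} (i : ℕ) {f h : EuclideanSpace ℝ (Fin m) → ℝ} {x : EuclideanSpace ℝ (Fin m)}
    (hfh : ∀ k ∈ KK i t, ∀ p : EuclideanSpace ℝ (Fin m), ‖p‖ ≤ r / 2 →
      f ((1 - 2 ^ k * th0 i t) • x + (2 ^ k * th0 i t) • p) = h ((1 - 2 ^ k * th0 i t) • x + (2 ^ k * th0 i t) • p)) :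
    TT a ψ t i f x = TT a ψ t i h x := by
  unfold TT
  refine Finset.sum_congr rfl fun k hk => ?_
  congr 1
  unfold JJ
  congr 1
  ext1 p
  by_cases hp : ψ p = 0
  · simp [hp]
  · rw [hfh k hk p (psi_zero hs hp)]

lemma TT_congr_ball {a : ℕ → ℝ} {ψ : EuclideanSpace ℝ (Fin m) → ℝ} (hs : tsupport ψ ⊆ closedBall 0 (r / 2))
    {t : ℝ} (ht : 1 ≤ t) (i : ℕ) {f h : EuclideanSpace ℝ (Fin m) → ℝ} {x : EuclideanSpace ℝ (Fin m)} {R : ℝ}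
    (hR : r / 2 < R) (hx : ‖x‖ < R) (hfh : ∀ y : EuclideanSpace ℝ (Fin m), ‖y‖ ≤ R → h y = f y) :
    TT a ψ t i f x = TT a ψ t i h x := by
  refine TT_congr hs i fun k hk p hp => (hfh _ ?_).symm
  obtain ⟨h0, _, h1⟩ := thk_bounds ht hk
  exact (z_mem h0.le (by linarith) hp hR hx).le

lemma z_closed (hr : 0 < r) {x p : EuclideanSpace ℝ (Fin m)} {θ θ0 : ℝ} (h0 : 0 < θ0) (hθ : θ0 ≤ θ) (h1 : θ ≤ 1)
    (hp : ‖p‖ ≤ r / 2) (hx : ‖x‖ ≤ r) : ‖(1 - θ) • x + θ • p‖ ≤ r * (1 - θ0 / 2) := by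
  refine (z_norm_le (by linarith) h1 hp).trans ?_
  have : (1 - θ) * ‖x‖ ≤ (1 - θ) * r := mul_le_mul_of_nonneg_left hx (by linarith)
  have : θ0 * r ≤ θ * r := by gcongr
  nlinarith

lemma th0_le_thk {i : ℕ} {t : ℝ} (ht : 1 ≤ t) (k : ℕ) : th0 i t ≤ 2 ^ k * th0 i t := by
  have : (1:ℝ) ≤ 2 ^ k := one_le_pow₀ (by norm_num)
  nlinarith [th0_pos i ht]

lemma TT_h (hr : 0 < r) (a : ℕ → ℝ) {ψ : EuclideanSpace ℝ (Fin m) → ℝ} (hs : tsupport ψ ⊆ closedBall 0 (r / 2))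
    {t : ℝ} (ht : 1 ≤ t) (i : ℕ) {f : EuclideanSpace ℝ (Fin m) → ℝ}
    (hf : ContDiffOn ℝ (⊤ : ℕ∞) f (closedBall 0 r)) :
    ∃ h : EuclideanSpace ℝ (Fin m) → ℝ, ContDiff ℝ (⊤ : ℕ∞) h ∧ HasCompactSupport h ∧
      ∀ x, ‖x‖ ≤ r → TT a ψ t i f x = TT a ψ t i h x := by
  have h0 := th0_pos i ht
  have h1 := th0_le i ht
  obtain ⟨h, hh, hc, heq⟩ := ext_h hf (R := r * (1 - th0 i t / 2)) (mul_pos hr (by linarith)) (by nlinarith)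
  refine ⟨h, hh, hc, fun x hx => TT_congr hs i fun k hk p hp => (heq _ ?_).symm⟩
  exact z_closed hr h0 (th0_le_thk ht k) ((thk_bounds ht hk).2.2.trans (by norm_num)) hp hx

lemma JJ_int (hr : 0 < r) {ψ : EuclideanSpace ℝ (Fin m) → ℝ} (hψ : Continuous ψ)
    (hψc : HasCompactSupport ψ) (hs : tsupport ψ ⊆ closedBall 0 (r / 2))
    {θ : ℝ} (h0 : 0 < θ) (h1 : θ ≤ 1) {f : EuclideanSpace ℝ (Fin m) → ℝ}
    (hf : ContDiffOn ℝ (⊤ : ℕ∞) f (closedBall 0 r)) {x : EuclideanSpace ℝ (Fin m)} (hx : ‖x‖ ≤ r) :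
    MeasureTheory.Integrable (fun p => ψ p • f ((1 - θ) • x + θ • p)) := by
  obtain ⟨h, hh, hc, heq⟩ := ext_h hf (R := r * (1 - θ / 2)) (mul_pos hr (by linarith)) (by nlinarith)
  refine (JJ_integrable hψ hψc θ hh.continuous x).congr (Filter.Eventually.of_forall fun p => ?_)
  by_cases hp : ψ p = 0
  · simp [hp]
  · simp only
    rw [heq _ (z_closed hr h0 le_rfl h1 (psi_zero hs hp) hx)]

lemma TT_add (hr : 0 < r) (a : ℕ → ℝ) {ψ : EuclideanSpace ℝ (Fin m) → ℝ} (hψ : Continuous ψ)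
    (hψc : HasCompactSupport ψ) (hs : tsupport ψ ⊆ closedBall 0 (r / 2))
    {t : ℝ} (ht : 1 ≤ t) (i : ℕ) {f g : EuclideanSpace ℝ (Fin m) → ℝ}
    (hf : ContDiffOn ℝ (⊤ : ℕ∞) f (closedBall 0 r)) (hg : ContDiffOn ℝ (⊤ : ℕ∞) g (closedBall 0 r))
    {x : EuclideanSpace ℝ (Fin m)} (hx : ‖x‖ ≤ r) :
    TT a ψ t i (f + g) x = TT a ψ t i f x + TT a ψ t i g x := by
  unfold TT
  rw [← Finset.sum_add_distrib]
  refine Finset.sum_congr rfl fun k hk => ?_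
  obtain ⟨h0, _, h1⟩ := thk_bounds ht hk
  rw [← mul_add]
  congr 1
  unfold JJ
  rw [← MeasureTheory.integral_add (JJ_int hr hψ hψc hs h0 (by linarith) hf hx)
    (JJ_int hr hψ hψc hs h0 (by linarith) hg hx)]
  congr 1
  ext1 p
  rw [Pi.add_apply, smul_add]

lemma TT_smul (a : ℕ → ℝ) (ψ : EuclideanSpace ℝ (Fin m) → ℝ)
    (t : ℝ) (i : ℕ) (c : ℝ) (f : EuclideanSpace ℝ (Fin m) → ℝ) (x : EuclideanSpace ℝ (Fin m)) :
    TT a ψ t i (c • f) x = c * TT a ψ t i f x := by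
  unfold TT
  rw [Finset.mul_sum]
  refine Finset.sum_congr rfl fun k hk => ?_
  have : JJ ψ (2 ^ k * th0 i t) (c • f) x = c * JJ ψ (2 ^ k * th0 i t) f x := by
    unfold JJ
    rw [← MeasureTheory.integral_const_mul]
    congr 1
    ext1 p
    simp only [Pi.smul_apply, smul_eq_mul]; ring
  rw [this]; ring

open Classical in
/-- the smoothing operator on flat functions -/
noncomputable def Sop (hr : 0 < r) (a : ℕ → ℝ) (ψ : EuclideanSpace ℝ (Fin m) → ℝ) (t : ℝ) (I : ℕ)
    (f : EuclideanSpace ℝ (Fin m) → ℝ) (x : EuclideanSpace ℝ (Fin m)) : ℝ :=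
  if ‖x‖ ≤ r then ∑ i ∈ Finset.range I, chii hr i x * TT a ψ t i f x else 0

lemma Sop_flat (hr : 0 < r) (a : ℕ → ℝ) {ψ : EuclideanSpace ℝ (Fin m) → ℝ} (hψ : Continuous ψ)
    (hψc : HasCompactSupport ψ) (hs : tsupport ψ ⊆ closedBall 0 (r / 2))
    {t : ℝ} (ht : 1 ≤ t) (I : ℕ) {f : EuclideanSpace ℝ (Fin m) → ℝ}
    (hf : ContDiffOn ℝ (⊤ : ℕ∞) f (closedBall 0 r)) : FlatSmoothOnBall m r (Sop hr a ψ t I f) := by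
  choose h hh hc heq using fun i => TT_h hr a hs ht i hf
  constructor
  · have h1 : ContDiff ℝ (⊤ : ℕ∞) (fun x => ∑ i ∈ Finset.range I, chii hr i x * TT a ψ t i (h i) x) :=
      ContDiff.sum fun i _ => (chii_contDiff hr i).mul (TT_contDiff hψ hψc t i (hh i) (hc i))
    refine h1.contDiffOn.congr fun x hx => ?_
    have hx' : ‖x‖ ≤ r := by simpa using hx
    unfold Sop
    rw [if_pos hx']
    exact Finset.sum_congr rfl fun i _ => by rw [heq i x hx']
  · intro e
    rw [within_eq (by simpa using hr)]
    have h1 : Sop hr a ψ t I f =ᶠ[nhds 0] 0 := by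
      have : ∀ᶠ y : EuclideanSpace ℝ (Fin m) in nhds 0, 2 ^ I * ‖y‖ < r :=
        (isOpen_lt (by fun_prop) continuous_const).mem_nhds (by simpa using hr)
      filter_upwards [this] with y hy
      unfold Sop
      split_ifs
      · refine Finset.sum_eq_zero fun i hi => ?_
        have hi' : i + 1 ≤ I := Finset.mem_range.1 hi
        have h2 : ∀ q ≤ I, (2:ℝ) ^ q * ‖y‖ ≤ r := fun q hq => by
          have : (2:ℝ) ^ q ≤ 2 ^ I := pow_le_pow_right₀ (by norm_num) hq
          have := mul_le_mul_of_nonneg_right this (norm_nonneg y)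
          linarith
        unfold chii
        rw [kapi_one hr (h2 i (by omega)), kapi_one hr (h2 (i+1) hi')]
        simp
      · rfl
    rw [(h1.iteratedFDeriv ℝ e).self_of_nhds]
    exact congrFun iteratedFDeriv_fun_zero 0

/-- flat functions form a submodule -/
def flatSub (m : ℕ) {r : ℝ} (hr : 0 < r) : Submodule ℝ (EuclideanSpace ℝ (Fin m) → ℝ) where
  carrier := {f | FlatSmoothOnBall m r f}
  zero_mem' := ⟨contDiffOn_const, fun i => by
    rw [within_eq (by simpa using hr)]; exact congrFun iteratedFDeriv_fun_zero 0⟩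
  add_mem' := by
    rintro f g hf hg
    have h0 : (0 : EuclideanSpace ℝ (Fin m)) ∈ closedBall 0 r := by simpa using hr.le
    refine ⟨hf.1.add hg.1, fun i => ?_⟩
    rw [iteratedFDerivWithin_add_apply ((hf.1.of_le (by exact_mod_cast le_top)) 0 h0)
      ((hg.1.of_le (by exact_mod_cast le_top)) 0 h0) (uniq_ball hr) h0, hf.2, hg.2, add_zero]
  smul_mem' := by
    rintro c f hf
    have h0 : (0 : EuclideanSpace ℝ (Fin m)) ∈ closedBall 0 r := by simpa using hr.le
    refine ⟨hf.1.const_smul c, fun i => ?_⟩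
    rw [iteratedFDerivWithin_const_smul_apply ((hf.1.of_le (by exact_mod_cast le_top)) 0 h0)
      (uniq_ball hr) h0, hf.2, smul_zero]

lemma exists_S (hr : 0 < r) (a : ℕ → ℝ) {ψ : EuclideanSpace ℝ (Fin m) → ℝ} (hψ : Continuous ψ)
    (hψc : HasCompactSupport ψ) (hs : tsupport ψ ⊆ closedBall 0 (r / 2)) (I : ℝ → ℕ) :
    ∃ S : ℝ → ℝ → ((EuclideanSpace ℝ (Fin m) → ℝ) →ₗ[ℝ] (EuclideanSpace ℝ (Fin m) → ℝ)),
      ∀ t s, 1 ≤ t → ∀ f, FlatSmoothOnBall m r f → S t s f = Sop hr a ψ t (I s) f := by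
  have key : ∀ t s : ℝ, ∃ T : ((EuclideanSpace ℝ (Fin m) → ℝ) →ₗ[ℝ] (EuclideanSpace ℝ (Fin m) → ℝ)),
      1 ≤ t → ∀ f, FlatSmoothOnBall m r f → T f = Sop hr a ψ t (I s) f := by
    intro t s
    by_cases ht : 1 ≤ t
    · let L : flatSub m hr →ₗ[ℝ] (EuclideanSpace ℝ (Fin m) → ℝ) :=
        { toFun := fun f => Sop hr a ψ t (I s) f.1
          map_add' := by
            rintro ⟨f, hf⟩ ⟨g, hg⟩
            ext1 x
            simp only [Submodule.coe_add, Pi.add_apply]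
            unfold Sop
            split_ifs with hx
            · rw [← Finset.sum_add_distrib]
              exact Finset.sum_congr rfl fun i _ => by
                rw [TT_add hr a hψ hψc hs ht i hf.1 hg.1 hx, mul_add]
            · simp
          map_smul' := by
            rintro c ⟨f, hf⟩
            ext1 x
            simp only [Submodule.coe_smul, RingHom.id_apply, Pi.smul_apply, smul_eq_mul]
            unfold Sop
            split_ifs with hx
            · rw [Finset.mul_sum]
              exact Finset.sum_congr rfl fun i _ => by
                rw [TT_smul]; ring
            · simp }
      obtain ⟨T, hT⟩ := LinearMap.exists_extend L
      refine ⟨T, fun _ f hf => ?_⟩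
      exact LinearMap.congr_fun hT (⟨f, hf⟩ : flatSub m hr)
    · exact ⟨0, fun h => absurd h ht⟩
  choose S hS using key
  exact ⟨S, hS⟩

lemma exists_I (s : ℝ) : ∃ I : ℕ, s ≤ 2 ^ I ∧ (0 < I → (2:ℝ) ^ I ≤ 2 * s) := by
  classical
  have h : ∃ I : ℕ, s ≤ 2 ^ I := (pow_unbounded_of_one_lt s (by norm_num : (1:ℝ) < 2)).imp fun _ h => h.le
  refine ⟨Nat.find h, Nat.find_spec h, fun h0 => ?_⟩
  have := Nat.find_min h (m := Nat.find h - 1) (by omega)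
  obtain ⟨q, hq⟩ : ∃ q, Nat.find h = q + 1 := ⟨Nat.find h - 1, by omega⟩
  rw [hq] at this ⊢
  simp only [Nat.add_sub_cancel, not_le] at this
  rw [pow_succ]; linarith

lemma WW_mono {u : EuclideanSpace ℝ (Fin m) → ℝ} {x : EuclideanSpace ℝ (Fin m)} {N K : ℕ} {B C : ℝ}
    (h : WW u x N K B) (hBC : B ≤ C) : WW u x N K C := fun e he =>
  (h e he).trans (mul_le_mul_of_nonneg_right hBC (by positivity))

end P7


section P8
variable {m : ℕ} {r : ℝ}

lemma local_h (hr : 0 < r) {f : EuclideanSpace ℝ (Fin m) → ℝ} (hf : FlatSmoothOnBall m r f)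
    {x : EuclideanSpace ℝ (Fin m)} (hx : ‖x‖ < r) :
    ∃ (R : ℝ) (h : EuclideanSpace ℝ (Fin m) → ℝ), r / 2 < R ∧ R < r ∧ ‖x‖ < R ∧ ContDiff ℝ (⊤ : ℕ∞) h ∧
      HasCompactSupport h ∧ (∀ y, ‖y‖ ≤ R → h y = f y) ∧
      ∀ n k y, ‖y‖ < R → ∀ e ≤ n, ‖iteratedFDeriv ℝ e h y‖ ≤ flatNorm m r n k f * ‖y‖ ^ (n - e + k) := by
  obtain ⟨R, hR1, hR2⟩ := exists_between (max_lt hx (by linarith : r / 2 < r))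
  have hR3 := (le_max_left _ _).trans_lt hR1
  have hR4 := (le_max_right _ _).trans_lt hR1
  obtain ⟨h, hh, hc, heq⟩ := ext_h hf.1 (by linarith) hR2
  refine ⟨R, h, hR4, hR2, hR3, hh, hc, heq, ?_⟩
  intro n k y hy e he
  have h1 : h =ᶠ[nhds y] f := by
    have : ∀ᶠ z : EuclideanSpace ℝ (Fin m) in nhds y, ‖z‖ < R :=
      (isOpen_lt continuous_norm continuous_const).mem_nhds hy
    filter_upwards [this] with z hz
    exact heq z hz.le
  rw [(h1.iteratedFDeriv ℝ e).self_of_nhds, ← within_eq (r := r) (by rw [mem_ball_zero_iff]; linarith)]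
  exact flatNorm_strong hr hf n k he (by rw [mem_closedBall_zero_iff]; linarith)

lemma pow_drop (hr : 0 < r) {x : ℝ} (hx0 : 0 ≤ x) (hx : x < r) {q N : ℕ} (hq : q ≤ N) (K : ℕ) :
    x ^ (q + K) ≤ (1 + r) ^ N * x ^ K := by
  rw [pow_add]
  refine mul_le_mul_of_nonneg_right ?_ (by positivity)
  calc x ^ q ≤ (1 + r) ^ q := pow_le_pow_left₀ hx0 (by linarith) q
    _ ≤ (1 + r) ^ N := pow_le_pow_right₀ (by linarith) hq

lemma est1 (hr : 0 < r) {a : ℕ → ℝ} (ha1 : ∀ q : ℕ, Summable (fun k => |a k| * (2 ^ k) ^ q))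
    {ψ : EuclideanSpace ℝ (Fin m) → ℝ} (hψ : ContDiff ℝ (⊤ : ℕ∞) ψ)
    (hψc : HasCompactSupport ψ) (hs : tsupport ψ ⊆ closedBall 0 (r / 2)) (n k l j : ℕ) :
    ∃ C : ℝ, 0 ≤ C ∧ ∀ f, FlatSmoothOnBall m r f → ∀ (t s : ℝ) (I : ℕ), 1 ≤ t → 0 < s →
      (0 < I → (2:ℝ) ^ I ≤ 2 * s) →
      flatNorm m r (n + l) (k + j) (Sop hr a ψ t I f) ≤ C * s ^ j * t ^ l * flatNorm m r n (k + 2 * l) f := by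
  obtain ⟨C1, hC1, hT1⟩ := T1 hr ha1 hψ hψc hs n k l
  obtain ⟨X, hX1, hX⟩ := chii_bound m hr (n + l)
  refine ⟨3 * (2 ^ (n + l) * X * (C1 * (2 / r) ^ j)) * (1 + r) ^ (n + l), by positivity, ?_⟩
  intro f hf t s I ht hs0 hI
  have hF := flatNorm_nonneg (r := r) n (k + 2 * l) f
  set F := flatNorm m r n (k + 2 * l) f with hFdef
  refine flatNorm_le hr (Sop_flat hr a hψ.continuous hψc hs ht I hf.1).1 _ _ (by positivity) ?_
  intro x hx hx0 e he
  have hxr : ‖x‖ < r := by simpa using hx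
  obtain ⟨R, h, hR1, hR2, hxR, hh, hc, heq, hb⟩ := local_h hr hf hxr
  have hev : Sop hr a ψ t I f =ᶠ[nhds x] fun y => ∑ i ∈ Finset.range I, chii hr i y * TT a ψ t i h y := by
    have : ∀ᶠ z : EuclideanSpace ℝ (Fin m) in nhds x, ‖z‖ < R :=
      (isOpen_lt continuous_norm continuous_const).mem_nhds hxR
    filter_upwards [this] with y hy
    unfold Sop
    rw [if_pos (by linarith)]
    exact Finset.sum_congr rfl fun i _ => by rw [TT_congr_ball hs ht i hR1 hy heq]
  have hW := WW_sum hr (u := fun i => TT a ψ t i h) I (fun i => TT_contDiff hψ.continuous hψc t i hh hc)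
    (x := x) (N := n + l) (K := k) (B := C1 * t ^ l * F * (2 * s * ‖x‖ / r) ^ j) (C := X) (by positivity)
    (fun a ha i => hX a ha i x) (fun i hi hi1 hi2 => by
      refine WW_mono (hT1 h hh hc R F t hF ht hR1 hR2.le i x hxR hi1 hi2
        (fun y hy e he => hb n (k + 2 * l) y hy e he)) ?_
      refine le_mul_of_one_le_right (by positivity) (one_le_pow₀ ?_)
      rw [one_le_div hr]
      have h1 : (2:ℝ) ^ (i + 1) ≤ 2 ^ I := pow_le_pow_right₀ (by norm_num) hi
      calc r ≤ 2 ^ (i + 1) * ‖x‖ := hi1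
        _ ≤ 2 * s * ‖x‖ := mul_le_mul_of_nonneg_right (h1.trans (hI (by omega))) (norm_nonneg _))
  rw [(hev.iteratedFDeriv ℝ e).self_of_nhds]
  refine (hW e he).trans ?_
  have hp := pow_drop hr (norm_nonneg x) hxr (Nat.sub_le (n + l) e) k
  calc _ ≤ 3 * (2 ^ (n + l) * X * (C1 * t ^ l * F * (2 * s * ‖x‖ / r) ^ j)) * ((1 + r) ^ (n + l) * ‖x‖ ^ k) := by
        gcongr
    _ = _ := by
        rw [show 2 * s * ‖x‖ / r = (2 / r) * s * ‖x‖ by ring, mul_pow, mul_pow, pow_add ‖x‖ k j]; ring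

lemma est2 (hr : 0 < r) {a : ℕ → ℝ} (ha1 : ∀ q : ℕ, Summable (fun k => |a k| * (2 ^ k) ^ q))
    (ha : ∀ q : ℕ, HasSum (fun k => a k * (2 ^ k) ^ q) (if q = 0 then 1 else 0))
    {ψ : EuclideanSpace ℝ (Fin m) → ℝ} (hψ : ContDiff ℝ (⊤ : ℕ∞) ψ)
    (hψc : HasCompactSupport ψ) (hs : tsupport ψ ⊆ closedBall 0 (r / 2)) (hψ1 : ∫ p, ψ p = 1) (n k l j : ℕ) :
    ∃ C : ℝ, 0 ≤ C ∧ ∀ f, FlatSmoothOnBall m r f → ∀ (t s : ℝ) (I : ℕ), 1 ≤ t → 0 < s →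
      s ≤ 2 ^ I →
      flatNorm m r n (k + 2 * l) (Sop hr a ψ t I f - f) ≤
        C * (t⁻¹ ^ l * flatNorm m r (n + l) k f + s⁻¹ ^ j * flatNorm m r n (k + 2 * l + j) f) := by
  obtain ⟨C2, hC2, hT2⟩ := T2 hr ha1 ha hψ hψc hs hψ1 n k l
  obtain ⟨X, hX1, hX⟩ := chii_bound m hr n
  obtain ⟨Y, hY1, hY⟩ := kapi_bound m hr n
  refine ⟨(3 * (2 ^ n * X * C2) + 2 ^ n * Y * (2 * r) ^ j) * (1 + r) ^ n, by positivity, ?_⟩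
  intro f hf t s I ht hs0 hI
  have hF1 := flatNorm_nonneg (r := r) (n + l) k f
  have hF2 := flatNorm_nonneg (r := r) n (k + 2 * l + j) f
  set F1 := flatNorm m r (n + l) k f with hF1def
  set F2 := flatNorm m r n (k + 2 * l + j) f with hF2def
  have ht0 : 0 < t⁻¹ := by positivity
  refine flatNorm_le hr ((Sop_flat hr a hψ.continuous hψc hs ht I hf.1).1.sub hf.1) _ _ (by positivity) ?_
  intro x hx hx0 e he
  have hxr : ‖x‖ < r := by simpa using hx
  obtain ⟨R, h, hR1, hR2, hxR, hh, hc, heq, hb⟩ := local_h hr hf hxr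
  have hev : (Sop hr a ψ t I f - f) =ᶠ[nhds x] fun y =>
      (∑ i ∈ Finset.range I, chii hr i y * (TT a ψ t i h y - h y)) - kapi hr I y * h y := by
    have : ∀ᶠ z : EuclideanSpace ℝ (Fin m) in nhds x, ‖z‖ < R :=
      (isOpen_lt continuous_norm continuous_const).mem_nhds hxR
    filter_upwards [this] with y hy
    rw [Pi.sub_apply]
    unfold Sop
    rw [if_pos (by linarith)]
    have h1 : ∑ i ∈ Finset.range I, chii hr i y * TT a ψ t i f y =
        ∑ i ∈ Finset.range I, chii hr i y * TT a ψ t i h y :=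
      Finset.sum_congr rfl fun i _ => by rw [TT_congr_ball hs ht i hR1 hy heq]
    have h2 := chii_sum hr I y
    rw [kapi_one hr (i := 0) (by rw [pow_zero, one_mul]; linarith)] at h2
    simp only [mul_sub]
    rw [h1, Finset.sum_sub_distrib, ← Finset.sum_mul, h2, heq y hy.le]
    ring
  have hW1 := WW_sum hr (u := fun i y => TT a ψ t i h y - h y) I
    (fun i => (TT_contDiff hψ.continuous hψc t i hh hc).sub hh)
    (x := x) (N := n) (K := k + 2 * l) (B := C2 * t⁻¹ ^ l * F1) (C := X) (by positivity)
    (fun a ha i => hX a ha i x) (fun i hi hi1 hi2 =>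
      hT2 h hh hc R F1 t hF1 ht hR1 hR2.le i x hxR hi1 hi2 (fun y hy e he => hb (n + l) k y hy e he))
  have hWh : WW h x n (k + 2 * l) (F2 * ‖x‖ ^ j) := by
    intro e he
    refine (hb n (k + 2 * l + j) x hxR e he).trans (le_of_eq ?_)
    rw [← add_assoc, pow_add ‖x‖ _ j]; ring
  have hs1 : 0 < s⁻¹ := by positivity
  have hW2 : WW (fun y => kapi hr I y * h y) x n (k + 2 * l) (2 ^ n * Y * ((2 * r) ^ j * s⁻¹ ^ j * F2)) := by
    by_cases hact : 2 ^ I * ‖x‖ ≤ 2 * r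
    · refine WW_mul (kapi_contDiff hr I) hh (by positivity) (fun a ha => hY a ha I x) (WW_mono hWh ?_)
      rw [← mul_pow, mul_comm F2]
      have : ‖x‖ ≤ 2 * r * s⁻¹ := by
        rw [← div_eq_mul_inv, le_div_iff₀ hs0]
        calc ‖x‖ * s ≤ ‖x‖ * 2 ^ I := by gcongr
          _ ≤ _ := by linarith
      gcongr
    · have := WW_mul (kapi_contDiff hr I) hh (C := 0) (by positivity) (fun a ha => by
        rw [kapi_deriv_zero hr (not_le.1 hact)]; simp) hWh
      refine WW_mono this ?_
      simp only [mul_zero, zero_mul]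
      positivity
  have hW := WW_add (ContDiff.sum fun i _ => (chii_contDiff hr i).mul
    ((TT_contDiff hψ.continuous hψc t i hh hc).sub hh)) ((kapi_contDiff hr I).mul hh) hW1 hW2
  change ‖iteratedFDeriv ℝ e (Sop hr a ψ t I f - f) x‖ ≤ _
  rw [(hev.iteratedFDeriv ℝ e).self_of_nhds]
  refine (hW e he).trans ?_
  have hp := pow_drop hr (norm_nonneg x) hxr (Nat.sub_le n e) (k + 2 * l)
  have hu : 0 ≤ t⁻¹ ^ l * F1 := by positivity
  have hv : 0 ≤ s⁻¹ ^ j * F2 := by positivity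
  have hP : 0 ≤ 3 * (2 ^ n * X * C2) := by positivity
  have hQ : 0 ≤ 2 ^ n * Y * (2 * r) ^ j := by positivity
  calc _ ≤ (3 * (2 ^ n * X * (C2 * t⁻¹ ^ l * F1)) + 2 ^ n * Y * ((2 * r) ^ j * s⁻¹ ^ j * F2)) *
          ((1 + r) ^ n * ‖x‖ ^ (k + 2 * l)) := mul_le_mul_of_nonneg_left hp (by positivity)
    _ = (3 * (2 ^ n * X * C2) * (t⁻¹ ^ l * F1) + 2 ^ n * Y * (2 * r) ^ j * (s⁻¹ ^ j * F2)) *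
          ((1 + r) ^ n * ‖x‖ ^ (k + 2 * l)) := by ring
    _ ≤ ((3 * (2 ^ n * X * C2) + 2 ^ n * Y * (2 * r) ^ j) * (t⁻¹ ^ l * F1 + s⁻¹ ^ j * F2)) *
          ((1 + r) ^ n * ‖x‖ ^ (k + 2 * l)) := by
        refine mul_le_mul_of_nonneg_right ?_ (by positivity)
        nlinarith [mul_nonneg hP hv, mul_nonneg hQ hu]
    _ = _ := by ring

end P8

/-- for each `m ≥ 1` and `r > 0` there is a two-parameter family of
linear smoothing operators `S_{t,s} : C^∞₀(B̄_r) → C^∞₀(B̄_r)` (`t ≥ 1`, `s > 0`) with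
`⟨S_{t,s} f⟩_{n+l,k+j,r} ≤ C s^j t^l ⟨f⟩_{n,k+2l,r}` and
`⟨(S_{t,s} − id) f⟩_{n,k+2l,r} ≤ C (t^{-l} ⟨f⟩_{n+l,k,r} + s^{-j} ⟨f⟩_{n,k+2l+j,r})`. -/
theorem combined_smoothing_operators (m : ℕ) (hm : 1 ≤ m) (r : ℝ) (hr : 0 < r) :
    ∃ S : ℝ → ℝ →
        ((EuclideanSpace ℝ (Fin m) → ℝ) →ₗ[ℝ] (EuclideanSpace ℝ (Fin m) → ℝ)),
      (∀ t s : ℝ, 1 ≤ t → 0 < s →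
        ∀ f, FlatSmoothOnBall m r f → FlatSmoothOnBall m r (S t s f)) ∧
      ∀ n k l j : ℕ, ∃ C > (0 : ℝ), ∀ f, FlatSmoothOnBall m r f →
        ∀ t s : ℝ, 1 ≤ t → 0 < s →
          flatNorm m r (n + l) (k + j) (S t s f) ≤
            C * s ^ j * t ^ l * flatNorm m r n (k + 2 * l) f ∧
          flatNorm m r n (k + 2 * l) (S t s f - f) ≤
            C * (t ^ (-(l : ℤ)) * flatNorm m r (n + l) k f +
              s ^ (-(j : ℤ)) * flatNorm m r n (k + 2 * l + j) f) := by
  obtain ⟨a, ha1, ha⟩ := exists_coef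
  let b : ContDiffBump (0 : EuclideanSpace ℝ (Fin m)) := ⟨r / 4, r / 2, by linarith, by linarith⟩
  let ψ : EuclideanSpace ℝ (Fin m) → ℝ := b.normed MeasureTheory.volume
  have hψ : ContDiff ℝ (⊤ : ℕ∞) ψ := b.contDiff_normed
  have hψc : HasCompactSupport ψ := b.hasCompactSupport_normed
  have hs : tsupport ψ ⊆ closedBall 0 (r / 2) := b.tsupport_normed_eq.le
  have hψ1 : ∫ p, ψ p = 1 := b.integral_normed
  choose I hI1 hI2 using exists_I
  obtain ⟨S, hS⟩ := exists_S hr a hψ.continuous hψc hs I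
  refine ⟨S, ?_, ?_⟩
  · intro t s ht _ f hf
    rw [hS t s ht f hf]
    exact Sop_flat hr a hψ.continuous hψc hs ht (I s) hf.1
  · intro n k l j
    obtain ⟨C1, hC1, h1⟩ := est1 hr ha1 hψ hψc hs n k l j
    obtain ⟨C2, hC2, h2⟩ := est2 hr ha1 ha hψ hψc hs hψ1 n k l j
    refine ⟨C1 + C2 + 1, by positivity, ?_⟩
    intro f hf t s ht hs0
    have hF := flatNorm_nonneg (r := r) n (k + 2 * l) f
    have hF1 := flatNorm_nonneg (r := r) (n + l) k f
    have hF2 := flatNorm_nonneg (r := r) n (k + 2 * l + j) f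
    have ht0 : 0 < t := by linarith
    rw [hS t s ht f hf, zpow_neg, zpow_neg, zpow_natCast, zpow_natCast, ← inv_pow, ← inv_pow]
    constructor
    · refine (h1 f hf t s (I s) ht hs0 (hI2 s)).trans ?_
      have : C1 ≤ C1 + C2 + 1 := by linarith
      gcongr
    · refine (h2 f hf t s (I s) ht hs0 (hI1 s)).trans ?_
      have : C2 ≤ C1 + C2 + 1 := by linarith
      gcongr
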